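/- arXiv:1002.2866 — 3 statements merged into one kernel-verified Lean document; each statement's English description precedes it below -/
import Mathlib

section
/- Let F : ℝ² → ℝ² be a lift of a homeomorphism f of the two-torus homotopic to the identity. Suppose f preserves Lebesgue (Haar) measure on T² and ρ(F) has non-empty interior. If U ⊆ T² is a connected and bounded open neighbourhood of a point z ∈ C(f) and Û is a connected component of π⁻¹(U), then limsup_{n→∞} diam(F^n(Û))/n > 0. -/
noncomputable section
open Filter Topology Metric Set MeasureTheory

/-- Euclidean space `ℝ^d`. -/
abbrev E (d : ℕ) := EuclideanSpace ℝ (Fin d)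

/-- The integer lattice `ℤ^d` as an additive subgroup of `ℝ^d`. -/
def ZLat (d : ℕ) : AddSubgroup (E d) where
  carrier := {z | ∀ i, ∃ m : ℤ, z i = (m : ℝ)}
  zero_mem' := fun i => ⟨0, by simp⟩
  add_mem' := by
    intro x y hx hy i
    obtain ⟨m, hm⟩ := hx i
    obtain ⟨n, hn⟩ := hy i
    exact ⟨m + n, by simp [PiLp.add_apply, hm, hn]⟩
  neg_mem' := by
    intro x hx i
    obtain ⟨m, hm⟩ := hx i
    exact ⟨-m, by simp [PiLp.neg_apply, hm]⟩

/-- The torus `T^d = ℝ^d / ℤ^d`. -/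
abbrev T (d : ℕ) := E d ⧸ ZLat d

/-- The canonical projection `π : ℝ^d → T^d`. -/
def tpi (d : ℕ) : E d → T d := QuotientAddGroup.mk

/-- The set of rotation vectors of orbit segments starting in `W ⊆ ℝ^d`:
`{ρ | ∃ nᵢ → ∞, zᵢ ∈ W, (F^{nᵢ}(zᵢ) - zᵢ)/nᵢ → ρ}`. -/
def rotRel {d : ℕ} (F : E d → E d) (W : Set (E d)) : Set (E d) :=
  {ρ | ∃ (n : ℕ → ℕ) (z : ℕ → E d),
    Tendsto n atTop atTop ∧ (∀ i, z i ∈ W) ∧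
    Tendsto (fun i => (n i : ℝ)⁻¹ • (F^[n i] (z i) - z i)) atTop (𝓝 ρ)}

/-- The Misiurewicz–Ziemian rotation set `ρ(F)` of a lift `F`. -/
def rotSet {d : ℕ} (F : E d → E d) : Set (E d) := rotRel F Set.univ

/-- The rotation subset `ρ_U(F)` for `U ⊆ T^d` (starting points in `π⁻¹(U)`). -/
def rotU {d : ℕ} (F : E d → E d) (U : Set (T d)) : Set (E d) :=
  rotRel F (tpi d ⁻¹' U)

/-- `F` is a lift of the torus homeomorphism `f` (which is then homotopic to the
identity, as expressed by commutation with the deck translations). -/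
def IsLift {d : ℕ} (F : E d ≃ₜ E d) (f : T d ≃ₜ T d) : Prop :=
  (∀ z : E d, tpi d (F z) = f (tpi d z)) ∧ ∀ z : E d, ∀ m ∈ ZLat d, F (z + m) = F z + m

/-- `U ⊆ T^d` is bounded: the connected components of `π⁻¹(U)` are bounded. -/
def BoundedSet {d : ℕ} (U : Set (T d)) : Prop :=
  ∀ z ∈ tpi d ⁻¹' U, Bornology.IsBounded (connectedComponentIn (tpi d ⁻¹' U) z)

/-- `U ⊆ T^d` is recurrent: `f^n(U) ∩ U ≠ ∅` for infinitely many `n ≥ 1`. -/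
def Recurrent {d : ℕ} (f : T d ≃ₜ T d) (U : Set (T d)) : Prop :=
  {n : ℕ | 1 ≤ n ∧ ((⇑f)^[n] '' U ∩ U).Nonempty}.Infinite

/-- The Euclidean scalar product `⟨z, v⟩` in `ℝ²`. -/
def sdot (v z : E 2) : ℝ := z 0 * v 0 + z 1 * v 1

/-- `⟨z, v^⊥⟩` where `v^⊥ = (-v₂, v₁)`. -/
def pdot (v z : E 2) : ℝ := z 1 * v 0 - z 0 * v 1

/-- The affine line `L_{λ,v} = λv + {v}^⊥ = {z | ⟨z,v⟩ = λ⟨v,v⟩}`. -/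
def lineL (lam : ℝ) (v : E 2) : Set (E 2) := {z | sdot v z = lam * sdot v v}

/-- A vector of `ℝ²` is rational if both coordinates are rational. -/
def RatVec (z : E 2) : Prop := (∃ q : ℚ, z 0 = (q : ℝ)) ∧ ∃ q : ℚ, z 1 = (q : ℝ)

instance ZLat_closed (d : ℕ) : IsClosed ((ZLat d : AddSubgroup (E d)) : Set (E d)) := by
  have h : ((ZLat d : AddSubgroup (E d)) : Set (E d)) =
      ⋂ i, (fun z : E d => z i) ⁻¹' (Set.range ((↑) : ℤ → ℝ)) := by
    ext z
    simp only [Set.mem_iInter, Set.mem_preimage, Set.mem_range]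
    constructor
    · intro hz i; obtain ⟨m, hm⟩ := hz i; exact ⟨m, hm.symm⟩
    · intro hz i; obtain ⟨m, hm⟩ := hz i; exact ⟨m, hm.symm⟩
  rw [h]
  exact isClosed_iInter fun i =>
    Int.isClosedEmbedding_coe_real.isClosed_range.preimage (EuclideanSpace.proj i).continuous

instance (d : ℕ) : MeasurableSpace (T d) := borel _
instance (d : ℕ) : BorelSpace (T d) := ⟨rfl⟩


theorem weak_mean_ergodic {α : Type*} [MeasurableSpace α] (μ : Measure α) [IsFiniteMeasure μ]
    (f : α → α) (hf : MeasurePreserving f μ μ) (ψ : α → E 2) (hψ : MemLp ψ 2 μ)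
    (s : Set α) (hs : MeasurableSet s) (c : E 2) :
    ∃ l : ℝ, Tendsto (fun n : ℕ => inner ℝ c (∫ x in s, birkhoffAverage ℝ f ψ n x ∂μ))
      atTop (𝓝 l) := by
  let K : Lp (E 2) 2 μ →L[ℝ] Lp (E 2) 2 μ :=
    (Lp.compMeasurePreservingₗᵢ ℝ f hf).toContinuousLinearMap
  have hK : ‖K‖ ≤ 1 := LinearIsometry.norm_toContinuousLinearMap_le _
  let g : Lp (E 2) 2 μ := hψ.toLp ψ
  have hiter : ∀ k : ℕ, K^[k] g = (hψ.comp_measurePreserving (hf.iterate k)).toLp _ := by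
    intro k
    induction k with
    | zero => rfl
    | succ k ih =>
      rw [Function.iterate_succ_apply', ih]
      rfl
  have h1 := K.tendsto_birkhoffAverage_orthogonalProjection hK g
  refine ⟨_, ((tendsto_const_nhds (x := indicatorConstLp 2 hs (measure_ne_top μ s) c)).inner (𝕜 := ℝ) h1).congr ?_⟩
  intro n
  rw [L2.inner_indicatorConstLp_eq_inner_setIntegral]
  congr 1
  apply setIntegral_congr_ae hs
  have e : birkhoffAverage ℝ K _root_.id n g
      = (n : ℝ)⁻¹ • ∑ k ∈ Finset.range n, (hψ.comp_measurePreserving (hf.iterate k)).toLp _ := by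
    simp only [birkhoffAverage, birkhoffSum, _root_.id, hiter]
  rw [e]
  have h2 := Lp.coeFn_smul ((n : ℝ)⁻¹)
    (∑ k ∈ Finset.range n, (hψ.comp_measurePreserving (hf.iterate k)).toLp _)
  have h3 : (↑↑(∑ k ∈ Finset.range n, (hψ.comp_measurePreserving (hf.iterate k)).toLp _) : α → E 2)
      =ᵐ[μ] fun x => ∑ k ∈ Finset.range n, ψ (f^[k] x) := by
    induction n with
    | zero =>
      simp only [Finset.range_zero, Finset.sum_empty]
      exact Lp.coeFn_zero _ _ _
    | succ n ih =>
      simp only [Finset.sum_range_succ]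
      have ih' := ih (by simp only [birkhoffAverage, birkhoffSum, _root_.id, hiter])
        (Lp.coeFn_smul _ _)
      filter_upwards [Lp.coeFn_add (∑ k ∈ Finset.range n,
        (hψ.comp_measurePreserving (hf.iterate k)).toLp _)
        ((hψ.comp_measurePreserving (hf.iterate n)).toLp _), ih',
        (hψ.comp_measurePreserving (hf.iterate n)).coeFn_toLp] with x a1 a2 a3
      rw [a1, Pi.add_apply, a2, a3]; rfl
  filter_upwards [h2, h3] with x a1 a2 _
  rw [a1, Pi.smul_apply, a2]; rfl

theorem tpi_add (x m : E 2) (hm : m ∈ ZLat 2) : tpi 2 (x + m) = tpi 2 x :=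
  (QuotientAddGroup.mk_add_of_mem x hm)

theorem exists_of_tpi_eq {x y : E 2} (h : tpi 2 x = tpi 2 y) : ∃ m ∈ ZLat 2, y = x + m := by
  have := QuotientAddGroup.eq.1 h
  exact ⟨-x + y, this, by abel⟩

theorem exists_cube (x : E 2) : ∃ m ∈ ZLat 2, x + m ∈ closedBall (0 : E 2) 2 := by
  refine ⟨!₂[((-⌊x 0⌋ : ℤ) : ℝ), ((-⌊x 1⌋ : ℤ) : ℝ)], ?_, ?_⟩
  · intro i
    fin_cases i
    · exact ⟨_, rfl⟩
    · exact ⟨_, rfl⟩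
  · rw [mem_closedBall_zero_iff, EuclideanSpace.norm_eq, Real.sqrt_le_left (by norm_num)]
    simp only [Fin.sum_univ_two, PiLp.add_apply, Real.norm_eq_abs, sq_abs]
    have a := Int.floor_le (x 0)
    have b := Int.lt_floor_add_one (x 0)
    have c := Int.floor_le (x 1)
    have d := Int.lt_floor_add_one (x 1)
    simp
    nlinarith

theorem compT : CompactSpace (T 2) := by
  constructor
  have : (univ : Set (T 2)) = tpi 2 '' closedBall (0 : E 2) 2 := by
    symm
    rw [eq_univ_iff_forall]
    intro y
    obtain ⟨x, rfl⟩ := QuotientAddGroup.mk_surjective y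
    obtain ⟨m, hm, h⟩ := exists_cube x
    exact ⟨x + m, h, tpi_add x m hm⟩
  rw [this]
  exact (isCompact_closedBall _ _).image continuous_quotient_mk'

theorem comp_add {S : Set (E 2)} (m : E 2) (hS : ∀ x ∈ S, x + m ∈ S) {x p : E 2} (hp : p ∈ S)
    (hx : x ∈ connectedComponentIn S p) : x + m ∈ connectedComponentIn S (p + m) := by
  have h1 : IsPreconnected ((fun y => y + m) '' connectedComponentIn S p) :=
    isPreconnected_connectedComponentIn.image _ (by fun_prop)
  refine h1.subset_connectedComponentIn ⟨p, mem_connectedComponentIn hp, rfl⟩ ?_ ⟨x, hx, rfl⟩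
  rintro _ ⟨y, hy, rfl⟩
  exact hS y (connectedComponentIn_subset _ _ hy)

theorem comp_surj (U : Set (T 2)) (hUopen : IsOpen U) (hU : IsConnected U) (w : E 2)
    (hw : w ∈ tpi 2 ⁻¹' U) : U ⊆ tpi 2 '' connectedComponentIn (tpi 2 ⁻¹' U) w := by
  set S := tpi 2 ⁻¹' U with hSdef
  have hcont : Continuous (tpi 2) := continuous_quotient_mk'
  have hS : IsOpen S := hUopen.preimage hcont
  have hopen : IsOpenMap (tpi 2) := QuotientAddGroup.isOpenMap_coe
  have hinv : ∀ m ∈ ZLat 2, ∀ x ∈ S, x + m ∈ S := by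
    intro m hm x hx
    simpa only [hSdef, mem_preimage, tpi_add x m hm] using hx
  set A := tpi 2 '' connectedComponentIn S w
  have hA : IsOpen A := hopen _ hS.connectedComponentIn
  let B : Set (T 2) := ⋃ x ∈ {x | x ∈ S ∧ tpi 2 x ∉ A}, tpi 2 '' connectedComponentIn S x
  have hB : IsOpen B := isOpen_biUnion fun x _ => hopen _ hS.connectedComponentIn
  have hAB : A ∩ B = ∅ := by
    rw [eq_empty_iff_forall_notMem]
    rintro y ⟨⟨q, hq, rfl⟩, hy⟩
    simp only [B, mem_iUnion] at hy
    obtain ⟨x, ⟨hxS, hxA⟩, p, hp, hpq⟩ := hy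
    obtain ⟨m, hm, rfl⟩ := exists_of_tpi_eq hpq
    apply hxA
    have hpS := connectedComponentIn_subset _ _ hp
    have hx : x ∈ connectedComponentIn S p := by
      rw [← connectedComponentIn_eq hp]; exact mem_connectedComponentIn hxS
    have := comp_add m (hinv m hm) hpS hx
    rw [← connectedComponentIn_eq hq] at this
    exact ⟨x + m, this, tpi_add x m hm⟩
  have hcov : U ⊆ A ∪ B := by
    intro y hy
    by_cases hyA : y ∈ A
    · exact Or.inl hyA
    · right
      obtain ⟨x, rfl⟩ := QuotientAddGroup.mk_surjective y
      simp only [B, mem_iUnion]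
      exact ⟨x, ⟨hy, hyA⟩, x, mem_connectedComponentIn hy, rfl⟩
  rcases (isPreconnected_iff_subset_of_disjoint.1 hU.isPreconnected) A B hA hB hcov
    (by rw [hAB, inter_empty]) with h | h
  · exact h
  · exfalso
    have h1 : tpi 2 w ∈ A := ⟨w, mem_connectedComponentIn hw, rfl⟩
    have : tpi 2 w ∈ A ∩ B := ⟨h1, h hw⟩
    rw [hAB] at this
    exact this

theorem exists_psi (F : E 2 ≃ₜ E 2) (f : T 2 ≃ₜ T 2) (hlift : IsLift F f) :
    ∃ ψ : T 2 → E 2, Continuous ψ ∧ ∀ x, ψ (tpi 2 x) = F x - x := by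
  have hcompat : ∀ a b : E 2, (QuotientAddGroup.leftRel (ZLat 2)) a b →
      F a - a = F b - b := by
    intro a b hab
    obtain ⟨m, hm, rfl⟩ := exists_of_tpi_eq (x := a) (y := b) (Quotient.sound hab)
    rw [hlift.2 a m hm]; abel
  refine ⟨Quotient.lift (fun x => F x - x) hcompat, ?_, fun x => rfl⟩
  exact Continuous.quotient_lift (F.continuous.sub continuous_id) _

theorem birk_eq (F : E 2 ≃ₜ E 2) (f : T 2 ≃ₜ T 2) (hlift : IsLift F f)
    (ψ : T 2 → E 2) (hψ : ∀ x, ψ (tpi 2 x) = F x - x) (n : ℕ) (x : E 2) :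
    birkhoffSum f ψ n (tpi 2 x) = F^[n] x - x := by
  have hit : ∀ k : ℕ, f^[k] (tpi 2 x) = tpi 2 (F^[k] x) := by
    intro k
    induction k with
    | zero => rfl
    | succ k ih => rw [Function.iterate_succ_apply', Function.iterate_succ_apply', ih, hlift.1]
  induction n with
  | zero => simp
  | succ n ih =>
    rw [birkhoffSum_succ, ih, hit, hψ, Function.iterate_succ_apply']
    abel

theorem rot_eq (f : T 2 ≃ₜ T 2) (μ : Measure (T 2)) [IsFiniteMeasure μ]
    (hpres : MeasurePreserving (⇑f) μ μ) (ψ : T 2 → E 2) (hψ : Continuous ψ)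
    (U : Set (T 2)) (hU : IsOpen U) (hpos : 0 < μ.real U)
    (hsmall : ∀ ε > 0, ∀ᶠ n : ℕ in atTop, ∀ y₁ ∈ U, ∀ y₂ ∈ U,
      ‖birkhoffAverage ℝ f ψ n y₁ - birkhoffAverage ℝ f ψ n y₂‖ ≤ ε) (c : E 2) :
    ∃ l : ℝ, ∀ (n : ℕ → ℕ) (y : ℕ → T 2) (ρ : E 2), Tendsto n atTop atTop → (∀ i, y i ∈ U) →
      Tendsto (fun i => birkhoffAverage ℝ f ψ (n i) (y i)) atTop (𝓝 ρ) → inner ℝ c ρ = l := by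
  haveI := compT
  have hbd : ∀ g : T 2 → E 2, Continuous g → ∃ C, ∀ x, ‖g x‖ ≤ C := by
    intro g hg
    obtain ⟨C, hC⟩ := isCompact_univ.exists_bound_of_continuousOn hg.continuousOn
    exact ⟨C, fun x => hC x (mem_univ _)⟩
  have hmem : MemLp ψ 2 μ := by
    obtain ⟨C, hC⟩ := hbd ψ hψ
    exact MemLp.of_bound hψ.aestronglyMeasurable C (Eventually.of_forall hC)
  have hAc : ∀ n, Continuous (birkhoffAverage ℝ f ψ n) := by
    intro n
    unfold birkhoffAverage birkhoffSum
    exact (continuous_finsetSum _ fun k _ => hψ.comp (f.continuous.iterate k)).const_smul ((n : ℝ)⁻¹)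
  have hAi : ∀ n, Integrable (birkhoffAverage ℝ f ψ n) μ := by
    intro n
    obtain ⟨C, hC⟩ := hbd _ (hAc n)
    exact Integrable.of_bound (hAc n).aestronglyMeasurable C (Eventually.of_forall hC)
  obtain ⟨l, hl⟩ := weak_mean_ergodic μ f hpres ψ hmem U hU.measurableSet c
  refine ⟨l / μ.real U, ?_⟩
  intro n y ρ hn hy hρ
  rw [eq_div_iff hpos.ne']
  have hlim1 := hl.comp hn
  have hlim2 : Tendsto (fun i => inner ℝ c (μ.real U • birkhoffAverage ℝ f ψ (n i) (y i)))
      atTop (𝓝 (inner ℝ c (μ.real U • ρ))) :=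
    (tendsto_const_nhds (x := c)).inner (𝕜 := ℝ) (hρ.const_smul _)
  have hdiff : Tendsto (fun i => (∫ x in U, birkhoffAverage ℝ f ψ (n i) x ∂μ) -
      μ.real U • birkhoffAverage ℝ f ψ (n i) (y i)) atTop (𝓝 0) := by
    rw [NormedAddGroup.tendsto_nhds_zero]
    intro ε hε
    filter_upwards [hn.eventually (hsmall (ε / (2 * μ.real U)) (by positivity))] with i hi
    have e1 : (∫ x in U, birkhoffAverage ℝ f ψ (n i) x ∂μ) -
        μ.real U • birkhoffAverage ℝ f ψ (n i) (y i) =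
        ∫ x in U, (birkhoffAverage ℝ f ψ (n i) x - birkhoffAverage ℝ f ψ (n i) (y i)) ∂μ := by
      rw [integral_sub (hAi _).integrableOn (integrable_const _), setIntegral_const]
    rw [e1]
    have e2 := norm_setIntegral_le_of_norm_le_const (μ := μ) (measure_lt_top μ U)
      (fun x hx => hi x hx (y i) (hy i))
    have e3 : ε / (2 * μ.real U) * μ.real U = ε / 2 := by field_simp
    linarith
  have hlim3 := (tendsto_const_nhds (x := c)).inner (𝕜 := ℝ) hdiff
  simp only [inner_sub_right, inner_zero_right] at hlim3
  have := tendsto_nhds_unique (hlim1.sub hlim2) hlim3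
  rw [inner_smul_right] at this
  linarith

/-- **Proposition (linear spreading in the chaotic region, part (b)).**
If `f` preserves Lebesgue (Haar) measure on `T²` and `ρ(F)` has non-empty interior,
then for any connected, bounded open neighbourhood `U` of a point `z` of the chaotic
region `C(f)` and any connected component `Û` of `π⁻¹(U)` one has
`limsup_{n→∞} diam(F^n(Û))/n > 0`. -/
theorem chaotic_region_linear_spreading
    (F : E 2 ≃ₜ E 2) (f : T 2 ≃ₜ T 2) (hlift : IsLift F f)
    (μ : Measure (T 2)) (hHaar : μ.IsAddHaarMeasure)
    (hpres : MeasurePreserving (⇑f) μ μ)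
    (hint : (interior (rotSet (⇑F))).Nonempty)
    (z : T 2)
    (hz : ∀ W : Set (T 2), IsOpen W → z ∈ W →
      (interior (convexHull ℝ (rotU (⇑F) W))).Nonempty)
    (U : Set (T 2)) (hUopen : IsOpen U) (hUconn : IsConnected U)
    (hUbdd : BoundedSet U) (hzU : z ∈ U)
    (Uhat : Set (E 2))
    (hUhat : ∃ w ∈ tpi 2 ⁻¹' U, Uhat = connectedComponentIn (tpi 2 ⁻¹' U) w) :
    0 < Filter.limsup (fun n : ℕ => Metric.diam ((⇑F)^[n] '' Uhat) / n) atTop := by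
  haveI := compT
  haveI := hHaar
  obtain ⟨w, hw, rfl⟩ := hUhat
  set V := connectedComponentIn (tpi 2 ⁻¹' U) w with hV
  have hVb : Bornology.IsBounded V := hUbdd w hw
  have hsurj := comp_surj U hUopen hUconn w hw
  obtain ⟨ψ, hψc, hψ⟩ := exists_psi F f hlift
  obtain ⟨C, hC⟩ := isCompact_univ.exists_bound_of_continuousOn hψc.continuousOn
  have hsum := birk_eq F f hlift ψ hψ
  have hdisp : ∀ n x, ‖F^[n] x - x‖ ≤ n * C := by
    intro n x
    rw [← hsum n x]
    unfold birkhoffSum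
    refine (norm_sum_le _ _).trans ?_
    refine (Finset.sum_le_sum fun k _ => hC _ (mem_univ _)).trans ?_
    simp
  have hC0 : 0 ≤ C := (norm_nonneg _).trans (hC z (mem_univ _))
  have hdist : ∀ n, ∀ x ∈ V, ∀ y ∈ V, dist (F^[n] x) (F^[n] y) ≤ n * (2 * C) + diam V := by
    intro n x hx y hy
    have h1 := hdisp n x
    have h2 := hdisp n y
    have h3 := dist_le_diam_of_mem hVb hx hy
    have h4 := dist_triangle4 (F^[n] x) x y (F^[n] y)
    rw [dist_eq_norm (F^[n] x) x, dist_comm y, dist_eq_norm (F^[n] y) y] at h4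
    linarith
  have hFb : ∀ n, Bornology.IsBounded (F^[n] '' V) := by
    intro n
    rw [Metric.isBounded_iff]
    refine ⟨n * (2 * C) + diam V, ?_⟩
    rintro _ ⟨x, hx, rfl⟩ _ ⟨y, hy, rfl⟩
    exact hdist n x hx y hy
  have hdiam : ∀ n : ℕ, diam (F^[n] '' V) / n ≤ 2 * C + diam V := by
    intro n
    rcases Nat.eq_zero_or_pos n with rfl | hn
    · simp; positivity
    have hn' : (1 : ℝ) ≤ n := by exact_mod_cast hn
    rw [div_le_iff₀ (by linarith)]
    have : diam (F^[n] '' V) ≤ n * (2 * C) + diam V := by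
      apply diam_le_of_forall_dist_le (by positivity)
      rintro _ ⟨x, hx, rfl⟩ _ ⟨y, hy, rfl⟩
      exact hdist n x hx y hy
    nlinarith [diam_nonneg (s := V)]
  by_contra hcon
  rw [not_lt] at hcon
  have hev : ∀ ε > 0, ∀ᶠ n : ℕ in atTop, diam (F^[n] '' V) / n < ε := by
    intro ε hε
    exact eventually_lt_of_limsup_lt (lt_of_le_of_lt hcon hε)
      (isBoundedUnder_of ⟨2 * C + diam V, hdiam⟩)
  have hsmall : ∀ ε > 0, ∀ᶠ n : ℕ in atTop, ∀ y₁ ∈ U, ∀ y₂ ∈ U,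
      ‖birkhoffAverage ℝ f ψ n y₁ - birkhoffAverage ℝ f ψ n y₂‖ ≤ ε := by
    intro ε hε
    have ht : Tendsto (fun n : ℕ => diam V / (n : ℝ)) atTop (𝓝 0) :=
      tendsto_const_div_atTop_nhds_zero_nat _
    filter_upwards [hev (ε / 2) (by positivity), ht.eventually_lt_const (half_pos hε),
      eventually_gt_atTop 0] with n h1 h2 hn y₁ hy₁ y₂ hy₂
    obtain ⟨x₁, hx₁, rfl⟩ := hsurj hy₁
    obtain ⟨x₂, hx₂, rfl⟩ := hsurj hy₂
    have hn' : (0 : ℝ) < n := by exact_mod_cast hn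
    unfold birkhoffAverage
    rw [hsum, hsum, ← smul_sub, norm_smul, norm_inv, Real.norm_of_nonneg hn'.le]
    have h3 := dist_le_diam_of_mem hVb hx₁ hx₂
    have h4 := dist_le_diam_of_mem (hFb n) (mem_image_of_mem _ hx₁) (mem_image_of_mem _ hx₂)
    have h5 : ‖F^[n] x₁ - x₁ - (F^[n] x₂ - x₂)‖ ≤ diam (F^[n] '' V) + diam V := by
      have : F^[n] x₁ - x₁ - (F^[n] x₂ - x₂) = (F^[n] x₁ - F^[n] x₂) - (x₁ - x₂) := by abel
      rw [this]
      refine (norm_sub_le _ _).trans ?_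
      rw [← dist_eq_norm, ← dist_eq_norm]
      linarith
    calc (n : ℝ)⁻¹ * ‖F^[n] x₁ - x₁ - (F^[n] x₂ - x₂)‖
        ≤ (n : ℝ)⁻¹ * (diam (F^[n] '' V) + diam V) := by gcongr
      _ = diam (F^[n] '' V) / n + diam V / n := by ring
      _ ≤ ε := by linarith
  have hpos : 0 < μ.real U :=
    ENNReal.toReal_pos (hUopen.measure_pos μ ⟨z, hzU⟩).ne' (measure_ne_top μ U)
  have hsub : (rotU (⇑F) U).Subsingleton := by
    rintro ρ₁ ⟨n₁, z₁, hn₁, hz₁, hρ₁⟩ ρ₂ ⟨n₂, z₂, hn₂, hz₂, hρ₂⟩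
    refine ext_inner_left ℝ fun c => ?_
    obtain ⟨l, hl⟩ := rot_eq f μ hpres ψ hψc U hUopen hpos hsmall c
    rw [hl n₁ (fun i => tpi 2 (z₁ i)) ρ₁ hn₁ hz₁
        (by simpa only [birkhoffAverage, hsum] using hρ₁),
      hl n₂ (fun i => tpi 2 (z₂ i)) ρ₂ hn₂ hz₂
        (by simpa only [birkhoffAverage, hsum] using hρ₂)]
  have hne := hz U hUopen hzU
  rcases hsub.eq_empty_or_singleton with h | ⟨a, h⟩
  · rw [h] at hne; simp at hne
  · rw [h, convexHull_singleton, interior_singleton] at hne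
    simp at hne
end
end

section
/- Let G : ℝ² → ℝ² be a lift of a homeomorphism g of the two-torus homotopic to the identity, let Û ⊆ ℝ² be bounded and connected with G(Û) ∩ Û ≠ ∅, let λ ≠ 0, v ∈ ℝ² \ {0} and a ≤ b. If ρ_Û(G) = L_{λ,v}[a,b], then every extremal point of the rotation set ρ(G) belongs to the cone C_v[a,b]. -/
noncomputable section
open Filter Topology Metric Set MeasureTheory

/-- The segment `L_{λ,v}[a,b] = {z ∈ L_{λ,v} | a⟨z,v⟩ ≤ ⟨z,v^⊥⟩ ≤ b⟨z,v⟩}`. -/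
def lineSeg (lam : ℝ) (v : E 2) (a b : ℝ) : Set (E 2) :=
  {z ∈ lineL lam v | a * sdot v z ≤ pdot v z ∧ pdot v z ≤ b * sdot v z}

/-- The cone `C_v[a,b] = {z | a⟨z,v⟩ ≤ ⟨z,v^⊥⟩ ≤ b⟨z,v⟩}`. -/
def coneC (v : E 2) (a b : ℝ) : Set (E 2) :=
  {z | a * sdot v z ≤ pdot v z ∧ pdot v z ≤ b * sdot v z}


/-- A continuous real function avoiding `A` and `B` which starts in `(A,B)` stays in it. -/
lemma stay_between {h : ℝ → ℝ} (hc : Continuous h) {A B : ℝ} {p q : ℝ} (hpq : p ≤ q)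
    (hA : ∀ t ∈ Icc p q, h t ≠ A) (hB : ∀ t ∈ Icc p q, h t ≠ B) {r : ℝ} (hr : r ∈ Icc p q)
    (h0 : A < h r ∧ h r < B) : ∀ t ∈ Icc p q, A < h t ∧ h t < B := by
  intro t ht
  have hpre : IsPreconnected (h '' Icc p q) :=
    (isPreconnected_Icc).image h hc.continuousOn
  have hord := hpre.ordConnected
  have hrm : h r ∈ h '' Icc p q := mem_image_of_mem _ hr
  have htm : h t ∈ h '' Icc p q := mem_image_of_mem _ ht
  constructor
  · by_contra hcon
    push Not at hcon
    obtain ⟨s, hs, hsA⟩ := hord.out htm hrm ⟨hcon, h0.1.le⟩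
    exact hA s hs hsA
  · by_contra hcon
    push Not at hcon
    obtain ⟨s, hs, hsA⟩ := hord.out hrm htm ⟨h0.2.le, hcon⟩
    exact hB s hs hsA

/-- Two-dimensional Poincaré–Miranda theorem. -/
lemma miranda (f : ℝ × ℝ → ℂ) (hf : Continuous f)
    (h1 : ∀ t ∈ Icc (0:ℝ) 1, (f (0, t)).re < 0) (h2 : ∀ t ∈ Icc (0:ℝ) 1, 0 < (f (1, t)).re)
    (h3 : ∀ s ∈ Icc (0:ℝ) 1, 0 < (f (s, 0)).im) (h4 : ∀ s ∈ Icc (0:ℝ) 1, (f (s, 1)).im < 0)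
    (hne : ∀ x, f x ≠ 0) : False := by
  obtain ⟨F, ⟨-, hF⟩, -⟩ := Complex.isCoveringMapOn_exp.existsUnique_continuousMap_lifts
    (⟨f, hf⟩ : C(ℝ × ℝ, ℂ)) (a₀ := (0, 0)) (e₀ := Complex.log (f (0,0)))
    (by simpa using Complex.exp_log (hne (0,0))) (by intro a; simpa using hne a)
  have hexp : ∀ x, Complex.exp (F x) = f x := fun x => congrFun hF x
  set θ : ℝ × ℝ → ℝ := fun x => (F x).im with hθ
  have hθc : Continuous θ := Complex.continuous_im.comp F.continuous
  have hre : ∀ x, (f x).re = Real.exp (F x).re * Real.cos (θ x) := by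
    intro x; rw [← hexp, Complex.exp_re]
  have him : ∀ x, (f x).im = Real.exp (F x).re * Real.sin (θ x) := by
    intro x; rw [← hexp, Complex.exp_im]
  have c1 : ∀ t ∈ Icc (0:ℝ) 1, Real.cos (θ (0,t)) < 0 := by
    intro t ht; have := h1 t ht; rw [hre] at this
    by_contra hcon; push Not at hcon
    have := mul_nonneg (Real.exp_pos (F (0,t)).re).le hcon; linarith
  have c2 : ∀ t ∈ Icc (0:ℝ) 1, 0 < Real.cos (θ (1,t)) := by
    intro t ht; have := h2 t ht; rw [hre] at this
    exact pos_of_mul_pos_right this (Real.exp_pos _).le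
  have c3 : ∀ t ∈ Icc (0:ℝ) 1, 0 < Real.sin (θ (t,0)) := by
    intro t ht; have := h3 t ht; rw [him] at this
    exact pos_of_mul_pos_right this (Real.exp_pos _).le
  have c4 : ∀ t ∈ Icc (0:ℝ) 1, Real.sin (θ (t,1)) < 0 := by
    intro t ht; have := h4 t ht; rw [him] at this
    by_contra hcon; push Not at hcon
    have := mul_nonneg (Real.exp_pos (F (t,1)).re).le hcon; linarith
  clear hre him hexp hF h1 h2 h3 h4
  have z0 : (0:ℝ) ∈ Icc (0:ℝ) 1 := by simp
  have z1 : (1:ℝ) ∈ Icc (0:ℝ) 1 := by simp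
  -- normalise
  obtain ⟨k, hk⟩ : ∃ k : ℤ, θ (0,0) - k * (2 * Real.pi) ∈ Ico (0:ℝ) (0 + 2 * Real.pi) := by
    obtain ⟨k, hk, -⟩ := existsUnique_sub_zsmul_mem_Ico Real.two_pi_pos (θ (0,0)) 0
    exact ⟨k, by simpa [zsmul_eq_mul] using hk⟩
  set ψ : ℝ × ℝ → ℝ := fun x => θ x - k * (2 * Real.pi) with hψ
  have hψc : Continuous ψ := by fun_prop
  have hcos : ∀ x, Real.cos (θ x) = Real.cos (ψ x) := fun x => by
    simp [hψ, Real.cos_sub_int_mul_two_pi]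
  have hsin : ∀ x, Real.sin (θ x) = Real.sin (ψ x) := fun x => by
    simp [hψ, Real.sin_sub_int_mul_two_pi]
  simp only [hcos, hsin] at c1 c2 c3 c4
  have hpi := Real.pi_pos
  have hk' : 0 ≤ ψ (0,0) ∧ ψ (0,0) < 2 * Real.pi := by simpa [hψ] using hk
  -- corner (0,0)
  have k1 : 0 < ψ (0,0) ∧ ψ (0,0) < Real.pi := by
    refine ⟨lt_of_le_of_ne hk'.1 ?_, ?_⟩
    · intro h; have := c3 0 z0; rw [← h] at this; simp at this
    · by_contra hcon; push Not at hcon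
      have := c3 0 z0
      have h2 : Real.sin (ψ (0,0) - Real.pi) ≥ 0 :=
        Real.sin_nonneg_of_nonneg_of_le_pi (by linarith) (by linarith)
      rw [Real.sin_sub_pi] at h2; linarith
  have k2 : Real.pi / 2 < ψ (0,0) := by
    by_contra hcon; push Not at hcon
    have := c1 0 z0
    have h2 := Real.cos_nonneg_of_neg_pi_div_two_le_of_le (x := ψ (0,0)) (by linarith) hcon
    linarith
  have s1 := stay_between (h := fun t => ψ (0,t)) (by fun_prop) (A := Real.pi/2)
    (B := Real.pi/2 + Real.pi) (zero_le_one)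
    (fun t ht h => by have := c1 t ht; rw [h] at this; simp at this)
    (fun t ht h => by
      have := c1 t ht; rw [h, Real.cos_add_pi] at this; simp at this) z0
      ⟨k2, by linarith [k1.2]⟩ 1 z1
  have s3 := stay_between (h := fun t => ψ (t,0)) (by fun_prop) (A := 0)
    (B := Real.pi) (zero_le_one)
    (fun t ht h => by have := c3 t ht; rw [h] at this; simp at this)
    (fun t ht h => by have := c3 t ht; rw [h] at this; simp at this) z0 k1 1 z1
  try simp only at s1 s3
  have k3 : ψ (1,0) < Real.pi / 2 := by
    by_contra hcon; push Not at hcon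
    have := c2 0 z0
    have h2 := Real.cos_nonpos_of_pi_div_two_le_of_le hcon (by linarith)
    linarith
  have s2 := stay_between (h := fun t => ψ (1,t)) (by fun_prop) (A := -(Real.pi/2))
    (B := Real.pi/2) (zero_le_one)
    (fun t ht h => by have := c2 t ht; rw [h] at this; simp at this)
    (fun t ht h => by have := c2 t ht; rw [h] at this; simp at this) z0
      ⟨by linarith, k3⟩ 1 z1
  try simp only at s2
  have k4 : ψ (1,1) < 0 := by
    by_contra hcon; push Not at hcon
    have := c4 1 z1
    have h2 := Real.sin_nonneg_of_nonneg_of_le_pi hcon (by linarith)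
    linarith
  have s4 := stay_between (h := fun t => ψ (t,1)) (by fun_prop) (A := -Real.pi)
    (B := 0) (zero_le_one)
    (fun t ht h => by have := c4 t ht; rw [h] at this; simp at this)
    (fun t ht h => by have := c4 t ht; rw [h] at this; simp at this) z1
      ⟨by linarith, k4⟩ 0 z0
  try simp only at s4
  linarith

/-- Crossing lemma: a path and a connected set crossing a rectangle in complementary
directions must meet. -/
lemma crossing (P Q : E 2 → ℝ) (hP : Continuous P) (hQ : Continuous Q)
    (hinj : ∀ x y, P x = P y → Q x = Q y → x = y)
    (A : Set (E 2)) (hA : IsPreconnected A) (γ : ℝ → E 2) (hγ : Continuous γ)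
    (p0 p1 q0 q1 : ℝ)
    (hγQ : ∀ s ∈ Icc (0:ℝ) 1, q0 < Q (γ s) ∧ Q (γ s) < q1)
    (hAP : ∀ z ∈ A, p0 < P z ∧ P z < p1)
    (hA0 : ∃ z ∈ A, Q z ≤ q0) (hA1 : ∃ z ∈ A, q1 ≤ Q z)
    (hγ0 : P (γ 0) ≤ p0) (hγ1 : p1 ≤ P (γ 1)) :
    ∃ s ∈ Icc (0:ℝ) 1, γ s ∈ A := by
  by_contra hcon
  push Not at hcon
  obtain ⟨z0, hz0, hz0q⟩ := hA0
  obtain ⟨z1, hz1, hz1q⟩ := hA1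
  set K : Set (E 2) := γ '' Icc 0 1 with hK
  have hKc : IsClosed K := (isCompact_Icc.image hγ).isClosed
  set O : Set (E 2) := (P ⁻¹' Ioo p0 p1) ∩ Kᶜ with hO
  have hOo : IsOpen O := (isOpen_Ioo.preimage hP).inter hKc.isOpen_compl
  have hAO : A ⊆ O := by
    intro z hz
    refine ⟨hAP z hz, ?_⟩
    rintro ⟨s, hs, rfl⟩
    exact hcon s hs hz
  have hsub := hA.subset_connectedComponentIn hz0 hAO
  have hCo : IsOpen (connectedComponentIn O z0) := hOo.connectedComponentIn
  have hCc : IsConnected (connectedComponentIn O z0) :=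
    isConnected_connectedComponentIn_iff.2 (hAO hz0)
  have hCp := (hCo.isConnected_iff_isPathConnected).1 hCc
  obtain ⟨α, hα⟩ := hCp.joinedIn z0 (hsub hz0) z1 (hsub hz1)
  have hαO : ∀ s, α.extend s ∈ O := by
    intro s
    have : α.extend s ∈ range α := by
      rw [← α.extend_range]; exact mem_range_self s
    obtain ⟨u, hu⟩ := this
    rw [← hu]
    exact connectedComponentIn_subset _ _ (hα u)
  set pr : ℝ → ℝ := fun t => (projIcc (0:ℝ) 1 zero_le_one t : ℝ) with hpr
  have hprc : Continuous pr := continuous_subtype_val.comp continuous_projIcc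
  have hprm : ∀ t, pr t ∈ Icc (0:ℝ) 1 := fun t => (projIcc (0:ℝ) 1 zero_le_one t).2
  have hpr' : ∀ t ∈ Icc (0:ℝ) 1, pr t = t := fun t ht => by
    simp only [hpr]; rw [projIcc_of_mem _ ht]
  have hαc : Continuous α.extend := α.continuous_extend
  refine miranda (fun x => (⟨Q (α.extend x.1) - Q (γ (pr x.2)),
    P (α.extend x.1) - P (γ (pr x.2))⟩ : ℂ)) ?_ ?_ ?_ ?_ ?_ ?_
  · have h1 : Continuous fun x : ℝ × ℝ => Q (α.extend x.1) - Q (γ (pr x.2)) := by fun_prop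
    have h2 : Continuous fun x : ℝ × ℝ => P (α.extend x.1) - P (γ (pr x.2)) := by fun_prop
    have : Continuous fun x : ℝ × ℝ => ((Q (α.extend x.1) - Q (γ (pr x.2)) : ℝ) : ℂ)
        + ((P (α.extend x.1) - P (γ (pr x.2)) : ℝ) : ℂ) * Complex.I := by fun_prop
    convert this using 2 with x
    apply Complex.ext <;> simp
  · intro t ht
    simp only [α.extend_zero]
    linarith [(hγQ _ (hprm t)).1]
  · intro t ht
    simp only [α.extend_one]
    linarith [(hγQ _ (hprm t)).2]
  · intro s hs
    simp only [hpr' 0 (by simp)]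
    linarith [(hαO s).1.1]
  · intro s hs
    simp only [hpr' 1 (by simp)]
    linarith [(hαO s).1.2]
  · intro x hx
    have hre := congrArg Complex.re hx
    have him := congrArg Complex.im hx
    simp only [Complex.zero_re, Complex.zero_im] at hre him
    have := hinj (α.extend x.1) (γ (pr x.2)) (by linarith) (by linarith)
    exact (hαO x.1).2 (this ▸ mem_image_of_mem _ (hprm x.2))

/-- The union of a block of iterates of a connected set is connected. -/
lemma block_connected (F : E 2 → E 2) (hF : Continuous F) (U : Set (E 2)) (hU : IsConnected U)
    (hmeet : (F '' U ∩ U).Nonempty) (m l : ℕ) :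
    IsPreconnected {z | ∃ j, m ≤ j ∧ j ≤ m + l ∧ ∃ u ∈ U, z = F^[j] u} := by
  have himg : ∀ j, IsPreconnected {z | ∃ u ∈ U, z = F^[j] u} := by
    intro j
    have := hU.isPreconnected.image (F^[j]) (hF.iterate j).continuousOn
    convert this using 1
    ext z; simp [eq_comm]
  obtain ⟨y, ⟨x, hx, rfl⟩, hy⟩ := hmeet
  induction l with
  | zero =>
    convert himg m using 1
    ext z
    constructor
    · rintro ⟨j, h1, h2, h3⟩
      have : j = m := by omega
      subst this; exact h3
    · intro h; exact ⟨m, le_rfl, by omega, h⟩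
  | succ l ih =>
    have h := IsPreconnected.union (F^[m + l] (F x)) ?_ ?_ ih (himg (m + l + 1))
    · convert h using 1
      ext z
      constructor
      · rintro ⟨j, h1, h2, h3⟩
        rcases Nat.lt_or_ge (m + l) j with h | h
        · right
          have : j = m + l + 1 := by omega
          subst this; exact h3
        · left; exact ⟨j, h1, h, h3⟩
      · rintro (⟨j, h1, h2, h3⟩ | h)
        · exact ⟨j, h1, by omega, h3⟩
        · exact ⟨m + l + 1, by omega, by omega, h⟩
    · exact ⟨m + l, by omega, le_rfl, F x, hy, rfl⟩
    · exact ⟨x, hx, by rw [Function.iterate_succ_apply]⟩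

/-- Case A: if the images of `U` are long in the direction `Y`, nothing moves faster than
`U` in the direction `S`. -/
lemma caseA (F : E 2 → E 2) (hF : Continuous F) (hFi : Function.Injective F)
    (S Y : E 2 →L[ℝ] ℝ) (hinj : ∀ x y, S x = S y → Y x = Y y → x = y)
    (hsurj : ∀ x y, ∃ d, S d = x ∧ Y d = y)
    (C R : ℝ) (hC : 0 < C) (hR : 0 < R)
    (hS : ∀ (n : ℕ) z, |S (F^[n] z) - S z| ≤ C * n)
    (hY : ∀ (n : ℕ) z, |Y (F^[n] z) - Y z| ≤ C * n)
    (hplace : ∀ (t : ℕ) z x y, ∃ w, |S w - x| ≤ R ∧ |Y w - y| ≤ R ∧ F^[t] w - w = F^[t] z - z)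
    (U : Set (E 2)) (hU : IsConnected U) (L : ℝ)
    (hUL : ∀ ε > 0, ∃ N : ℕ, ∀ n ≥ N, ∀ z ∈ U, |S (F^[n] z) - L * n| ≤ ε * n)
    (c : ℝ) (hc : 0 < c)
    (hlong : ∀ N : ℕ, ∃ n ≥ N, ∃ z ∈ U, ∃ z' ∈ U, c * n ≤ Y (F^[n] z') - Y (F^[n] z))
    (η : ℝ) (hη : 0 < η)
    (hmove : ∀ t : ℕ, 1 ≤ t → ∃ z, η * t ≤ S (F^[t] z) - S z - L * t) : False := by
  obtain ⟨δ, hδ0, hδ1, hδC⟩ : ∃ δ > 0, δ ≤ 1 ∧ C * δ ≤ c / 8 := by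
    refine ⟨min 1 (c / (8 * C)), by positivity, min_le_left _ _, ?_⟩
    calc C * min 1 (c / (8 * C)) ≤ C * (c / (8 * C)) := by gcongr; exact min_le_right _ _
      _ = c / 8 := by field_simp
  set ε := η * δ / 12 with hε
  have hε0 : 0 < ε := by positivity
  obtain ⟨N, hN⟩ := hUL ε hε0
  obtain ⟨N1, hN1⟩ := exists_nat_gt (2 / δ + (R + 1) / ε + 4 * R / c + 1)
  obtain ⟨n, hn, z, hz, z', hz', hzz⟩ := hlong (max N N1)
  have hnN : N ≤ n := le_trans (le_max_left _ _) hn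
  have hnr : 2 / δ + (R + 1) / ε + 4 * R / c + 1 < (n:ℝ) :=
    lt_of_lt_of_le hN1 (by exact_mod_cast le_trans (le_max_right _ _) hn)
  have q1 : 0 < 2 / δ := by positivity
  have q2 : 0 < (R + 1) / ε := by positivity
  have q3 : 0 < 4 * R / c := by positivity
  have r1 : 2 < δ * n := by
    have : 2 / δ < n := by linarith
    rw [div_lt_iff₀ hδ0] at this; linarith
  have r2 : R + 1 < ε * n := by
    have : (R + 1) / ε < n := by linarith
    rw [div_lt_iff₀ hε0] at this; linarith
  have r3 : 4 * R < c * n := by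
    have : 4 * R / c < n := by linarith
    rw [div_lt_iff₀ hc] at this; linarith
  have hn0 : 0 < (n:ℝ) := by linarith
  set t := ⌊δ * n⌋₊ with ht
  have ht1 : (t:ℝ) ≤ δ * n := Nat.floor_le (by positivity)
  have ht2 : δ * n < t + 1 := Nat.lt_floor_add_one _
  have ht3 : δ * n / 2 ≤ t := by linarith
  have htn : (t:ℝ) ≤ n := by nlinarith
  have ht0 : 1 ≤ t := by
    have : (1:ℝ) < t := by linarith
    exact_mod_cast this.le
  have hCt : C * t ≤ c * n / 8 := by
    have : C * t ≤ C * (δ * n) := by gcongr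
    have h2 : C * δ * n ≤ c / 8 * n := by gcongr
    linarith
  have hηt : 6 * (ε * n) ≤ η * t := by
    have : η * (δ * n / 2) ≤ η * t := by gcongr
    have h2 : 6 * (ε * n) = η * (δ * n / 2) := by rw [hε]; ring
    linarith
  obtain ⟨zm, hzm⟩ := hmove t ht0
  obtain ⟨w, hw1, hw2, hw3⟩ := hplace t zm (L * n - 2 * (ε * n))
    ((Y (F^[n] z) + Y (F^[n] z')) / 2)
  have hwS : S (F^[t] w) - S w = S (F^[t] zm) - S zm := by
    rw [← map_sub, ← map_sub, hw3]
  set h := (C + 2 * |L| + 4 * ε + 1) * n with hh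
  obtain ⟨d, hd1, hd2⟩ := hsurj (-h) 0
  have hh0 : 0 < h := by positivity
  rw [abs_le] at hw1 hw2
  have hγS : ∀ s : ℝ, S (w + s • d) = S w - s * h := by
    intro s; rw [map_add, map_smul, hd1, smul_eq_mul]; ring
  have hγY : ∀ s : ℝ, Y (w + s • d) = Y w := by
    intro s; rw [map_add, map_smul, hd2, smul_eq_mul]; ring
  have hεt : ε * t ≤ ε * n := by gcongr
  have hLt : |L * t| ≤ |L| * n := by
    rw [abs_mul, Nat.abs_cast]; gcongr
  rw [abs_le] at hLt
  obtain ⟨s, hs, x, hxU, hx⟩ := crossing (fun z => -S z) Y (by fun_prop) (by fun_prop)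
    (fun x y h1 h2 => hinj x y (by simpa using h1) h2)
    ((F^[t + n]) '' U) (hU.isPreconnected.image _ (hF.iterate _).continuousOn)
    (fun s => F^[t] (w + s • d)) ((hF.iterate t).comp (by fun_prop))
    (-(L * (t + n)) - 2 * (ε * n) - 1) (-(L * (t + n)) + 2 * (ε * n) + 1)
    (Y (F^[n] z) + C * t) (Y (F^[n] z') - C * t)
    (by
      intro s hs
      have h1 := hY t (w + s • d)
      rw [hγY, abs_le] at h1
      constructor <;> linarith)
    (by
      rintro _ ⟨x, hx, rfl⟩
      have h1 := hN (t + n) (by omega) x hx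
      push_cast at h1
      rw [abs_le] at h1
      constructor <;> linarith)
    ⟨_, mem_image_of_mem _ hz, by
      rw [Function.iterate_add_apply]
      have := hY t (F^[n] z)
      rw [abs_le] at this; linarith⟩
    ⟨_, mem_image_of_mem _ hz', by
      rw [Function.iterate_add_apply]
      have := hY t (F^[n] z')
      rw [abs_le] at this; linarith⟩
    (by
      simp only [zero_smul, add_zero]
      linarith)
    (by
      have h1 := hS t (w + (1:ℝ) • d)
      rw [hγS, abs_le] at h1
      have h2 : C * t ≤ C * n := by gcongr
      have h3 : h = C * n + 2 * (|L| * n) + 4 * (ε * n) + n := by rw [hh]; ring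
      have h4 : (1:ℝ) ≤ n := by linarith
      have h5 : 0 ≤ |L| * n := by positivity
      try dsimp only
      linarith)
  try dsimp only at hx
  rw [Function.iterate_add_apply] at hx
  have hx' := hFi.iterate t hx
  have h1 := hN n hnN x hxU
  rw [hx', hγS, abs_le] at h1
  have h2 : 0 ≤ s * h := mul_nonneg hs.1 hh0.le
  linarith

/-- Case C: everything moves with `X`-speed `Λ`. -/
lemma caseC (F : E 2 → E 2) (hF : Continuous F) (hFi : Function.Injective F)
    (X Y : E 2 →L[ℝ] ℝ) (hinj : ∀ x y, X x = X y → Y x = Y y → x = y)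
    (hsurj : ∀ x y, ∃ d, X d = x ∧ Y d = y)
    (C R : ℝ) (hC : 0 < C) (hR : 0 < R)
    (hY : ∀ (n : ℕ) z, |Y (F^[n] z) - Y z| ≤ C * n)
    (hplace : ∀ (t : ℕ) z x y, ∃ w, |X w - x| ≤ R ∧ |Y w - y| ≤ R ∧ F^[t] w - w = F^[t] z - z)
    (U : Set (E 2)) (hU : IsConnected U) (hmeet : (F '' U ∩ U).Nonempty)
    (L : ℝ) (hL : 0 < L) (γ : ℝ) (hγ : 0 ≤ γ)
    (hUL : ∀ ε > 0, ∃ N : ℕ, ∀ n ≥ N, ∀ z ∈ U, |X (F^[n] z) - L * n| ≤ ε * n ∧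
      Y (F^[n] z) ≤ ε * n ∧ -((γ + ε) * n) ≤ Y (F^[n] z))
    (hunif : ∀ ε > 0, ∃ N : ℕ, ∀ n ≥ N, ∀ z, |X (F^[n] z) - X z - L * n| ≤ ε * n)
    (η : ℝ) (hη : 0 < η)
    (hmove : ∀ t : ℕ, 1 ≤ t → ∃ z, η * t ≤ Y (F^[t] z) - Y z) : False := by
  obtain ⟨T, hT⟩ := exists_nat_gt ((3 * (γ + 1) + 3) / η)
  have hT0 : 1 ≤ T := by
    have : (0:ℝ) < T := lt_of_le_of_lt (by positivity) hT
    exact_mod_cast this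
  have hTη : 3 * (γ + 1) + 3 < η * T := by
    rw [div_lt_iff₀ hη] at hT; linarith
  obtain ⟨ε, hε0, hεT, hεL⟩ : ∃ ε : ℝ, 0 < ε ∧ ε * (T + 3) ≤ 1 ∧ ε * (T + 3) ≤ L / 4 := by
    refine ⟨min 1 (L / 4) / (T + 3), by positivity, ?_, ?_⟩
    · rw [div_mul_cancel₀ _ (by positivity)]; exact min_le_left _ _
    · rw [div_mul_cancel₀ _ (by positivity)]; exact min_le_right _ _
  have hT1 : (1:ℝ) ≤ T := by exact_mod_cast hT0
  have hε1 : ε ≤ 1 := by nlinarith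
  obtain ⟨N, hN⟩ := hUL ε hε0
  obtain ⟨N', hN'⟩ := hunif ε hε0
  obtain ⟨N1, hN1⟩ := exists_nat_gt (2 * R + 2 + 4 * R / L)
  set m := max N (max N' N1) with hm
  have hmN : N ≤ m := le_max_left _ _
  have hmN' : N' ≤ m := (le_max_left _ _).trans (le_max_right _ _)
  have hmr : 2 * R + 2 + 4 * R / L < (m:ℝ) :=
    lt_of_lt_of_le hN1 (by exact_mod_cast (le_max_right N' N1).trans (le_max_right _ _))
  have q3 : 0 < 4 * R / L := by positivity
  have r3 : 4 * R < L * m := by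
    have : 4 * R / L < m := by linarith
    rw [div_lt_iff₀ hL] at this; linarith
  have hm0 : 0 < (m:ℝ) := by linarith
  set t := T * m with ht
  have htm : m ≤ t := Nat.le_mul_of_pos_left m hT0
  have htr : (t:ℝ) = T * m := by rw [ht]; push_cast; ring
  have hm1 : 1 ≤ m := by
    have : (0:ℝ) < m := hm0
    exact_mod_cast this
  obtain ⟨zm, hzm⟩ := hmove t (hm1.trans htm)
  obtain ⟨w, hw1, hw2, hw3⟩ := hplace t zm (2 * L * m) (-(3 * (γ + 1) * m) - R - 1)
  have hwY : Y (F^[t] w) - Y w = Y (F^[t] zm) - Y zm := by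
    rw [← map_sub, ← map_sub, hw3]
  set h := C * t + (γ + 1) * (3 * m + t) + 1 with hh
  obtain ⟨d, hd1, hd2⟩ := hsurj 0 (-h)
  have hh0 : 0 < h := by positivity
  rw [abs_le] at hw1 hw2
  have hγY : ∀ s : ℝ, Y (w + s • d) = Y w - s * h := by
    intro s; rw [map_add, map_smul, hd2, smul_eq_mul]; ring
  have hγX : ∀ s : ℝ, X (w + s • d) = X w := by
    intro s; rw [map_add, map_smul, hd1, smul_eq_mul]; ring
  have e1 : ε * t + 3 * (ε * m) ≤ m := by
    have : ε * (T + 3) * m ≤ 1 * m := by gcongr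
    rw [htr]; linarith
  have e2 : ε * t + 3 * (ε * m) ≤ L * m / 4 := by
    have : ε * (T + 3) * m ≤ L / 4 * m := by gcongr
    rw [htr]; linarith
  have e3 : 0 < ε * m := by positivity
  have e4 : 3 * (γ + 1) * m + 3 * m ≤ η * t := by
    have : (3 * (γ + 1) + 3) * m ≤ (η * T) * m := by gcongr
    rw [htr]; linarith
  have e5 : 0 ≤ ε * t := by positivity
  have e6 : 0 ≤ γ * m := by positivity
  -- bounds on the block
  have hblk : ∀ j, m ≤ j → j ≤ m + 2 * m → (j:ℝ) ≤ 3 * m := by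
    intro j _ h2
    have : (j:ℝ) ≤ ((m + 2 * m : ℕ) : ℝ) := by exact_mod_cast h2
    push_cast at this; linarith
  obtain ⟨u0, hu0⟩ := hU.nonempty
  obtain ⟨s, hs, x, hxA, hx⟩ := crossing (fun z => -Y z) X (by fun_prop) (by fun_prop)
    (fun x y h1 h2 => hinj x y h2 (by simpa using h1))
    ((F^[t]) '' {z | ∃ j, m ≤ j ∧ j ≤ m + 2 * m ∧ ∃ u ∈ U, z = F^[j] u})
    ((block_connected F hF U hU hmeet m (2 * m)).image _ (hF.iterate _).continuousOn)
    (fun s => F^[t] (w + s • d)) ((hF.iterate t).comp (by fun_prop))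
    (-(m:ℝ) - 1/2) ((γ + 1) * (3 * m + t) + 1/2)
    (2 * L * m + L * t - L * m / 2 - ε * t) (2 * L * m + L * t + L * m / 2 + ε * t)
    (by
      intro s hs
      have h1 := hN' t (hmN'.trans htm) (w + s • d)
      rw [hγX, abs_le] at h1
      constructor <;> linarith)
    (by
      rintro _ ⟨_, ⟨j, hj1, hj2, x, hx, rfl⟩, rfl⟩
      have h1 := hN (t + j) (by omega) x hx
      rw [Function.iterate_add_apply] at h1
      push_cast at h1
      have hj := hblk j hj1 hj2
      have h2 : ε * j ≤ ε * (3 * m) := by gcongr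
      have h3 : (γ + ε) * (t + j) ≤ (γ + 1) * (3 * m + t) := by
        have : (t:ℝ) + j ≤ 3 * m + t := by linarith
        gcongr
      constructor <;> linarith [h1.2.1, h1.2.2])
    ⟨_, mem_image_of_mem _ ⟨m, le_rfl, by omega, u0, hu0, rfl⟩, by
      rw [← Function.iterate_add_apply]
      have := (hN (t + m) (by omega) u0 hu0).1
      push_cast at this
      rw [abs_le] at this; linarith⟩
    ⟨_, mem_image_of_mem _ ⟨m + 2 * m, by omega, le_rfl, u0, hu0, rfl⟩, by
      rw [← Function.iterate_add_apply]
      have := (hN (t + (m + 2 * m)) (by omega) u0 hu0).1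
      push_cast at this
      rw [abs_le] at this; linarith⟩
    (by
      simp only [zero_smul, add_zero]
      linarith)
    (by
      have h1 := hY t (w + (1:ℝ) • d)
      rw [hγY, abs_le] at h1
      try dsimp only
      linarith)
  obtain ⟨j, hj1, hj2, u, hu, rfl⟩ := hxA
  try dsimp only at hx
  have hx' := hFi.iterate t hx
  have h1 := (hN j (by omega) u hu).2.2
  rw [hx', hγY] at h1
  have hj := hblk j hj1 hj2
  have h3 : (γ + ε) * j ≤ (γ + 1) * (3 * m) := by gcongr
  have h2 : 0 ≤ s * h := mul_nonneg hs.1 hh0.le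
  linarith

set_option maxHeartbeats 1000000 in
/-- Case B: the images of `U` are short in the direction `Y`. -/
lemma caseB (F : E 2 → E 2) (hF : Continuous F) (hFi : Function.Injective F)
    (X Y : E 2 →L[ℝ] ℝ) (hinj : ∀ x y, X x = X y → Y x = Y y → x = y)
    (hsurj : ∀ x y, ∃ d, X d = x ∧ Y d = y)
    (C R : ℝ) (hC : 0 < C) (hR : 0 < R)
    (hX : ∀ (n : ℕ) z, |X (F^[n] z) - X z| ≤ C * n)
    (hY : ∀ (n : ℕ) z, |Y (F^[n] z) - Y z| ≤ C * n)
    (hplace : ∀ (t : ℕ) z x y, ∃ w, |X w - x| ≤ R ∧ |Y w - y| ≤ R ∧ F^[t] w - w = F^[t] z - z)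
    (U : Set (E 2)) (hU : IsConnected U) (hmeet : (F '' U ∩ U).Nonempty)
    (L : ℝ) (hL : 0 < L) (γ : ℝ) (hγ : 0 ≤ γ)
    (hUL : ∀ ε > 0, ∃ N : ℕ, ∀ n ≥ N, ∀ z ∈ U, |X (F^[n] z) - L * n| ≤ ε * n ∧
      Y (F^[n] z) ≤ ε * n ∧ -((γ + ε) * n) ≤ Y (F^[n] z))
    (hshort : ∀ ε > 0, ∃ N : ℕ, ∀ n ≥ N, ∀ z ∈ U, ∀ z' ∈ U, Y (F^[n] z') - Y (F^[n] z) ≤ ε * n)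
    (htop : ∀ ε > 0, ∀ N : ℕ, ∃ n ≥ N, ∃ z ∈ U, -(ε * n) ≤ Y (F^[n] z))
    (η : ℝ) (hη : 0 < η)
    (hmove : ∀ t : ℕ, 1 ≤ t → ∃ z, η * t ≤ Y (F^[t] z) - Y z) : False := by
  obtain ⟨δ, hδ0, hδ1, hδC⟩ : ∃ δ > 0, δ ≤ 1 ∧ (C + L) * δ ≤ L / 8 := by
    refine ⟨min 1 (L / (8 * (C + L))), by positivity, min_le_left _ _, ?_⟩
    calc (C + L) * min 1 (L / (8 * (C + L))) ≤ (C + L) * (L / (8 * (C + L))) := by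
          gcongr; exact min_le_right _ _
      _ = L / 8 := by field_simp
  set B := 3 + 3 * C / L with hB
  have hB0 : 0 < B := by positivity
  obtain ⟨ε, hε0, hεη, hεL, hε1⟩ : ∃ ε > 0, (B + 6) * ε ≤ η * δ / 2 ∧ 3 * ε ≤ L / 8 ∧ ε ≤ 1 := by
    refine ⟨min (min (η * δ / 2 / (B + 6)) (L / 24)) 1, by positivity, ?_, ?_, min_le_right _ _⟩
    · calc _ ≤ (B + 6) * (η * δ / 2 / (B + 6)) := by
            gcongr; exact (min_le_left _ _).trans (min_le_left _ _)
        _ = _ := by field_simp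
    · have : min (min (η * δ / 2 / (B + 6)) (L / 24)) 1 ≤ L / 24 :=
        (min_le_left _ _).trans (min_le_right _ _)
      linarith
  obtain ⟨N, hN⟩ := hUL ε hε0
  obtain ⟨N', hN'⟩ := hshort ε hε0
  obtain ⟨N1, hN1⟩ := exists_nat_gt (2 / δ + (R + 1) / ε + 8 * (R + L) / L + 3)
  obtain ⟨n, hn, z, hz, hztop⟩ := htop ε hε0 (max (2 * N) (max N' N1))
  have hnN : 2 * N ≤ n := le_trans (le_max_left _ _) hn
  have hnN' : N' ≤ n := le_trans ((le_max_left _ _).trans (le_max_right _ _)) hn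
  have hnr : 2 / δ + (R + 1) / ε + 8 * (R + L) / L + 3 < (n:ℝ) :=
    lt_of_lt_of_le hN1
      (by exact_mod_cast le_trans ((le_max_right _ _).trans (le_max_right _ _)) hn)
  have q1 : 0 < 2 / δ := by positivity
  have q2 : 0 < (R + 1) / ε := by positivity
  have q3 : 0 < 8 * (R + L) / L := by positivity
  have r1 : 2 < δ * n := by
    have : 2 / δ < n := by linarith
    rw [div_lt_iff₀ hδ0] at this; linarith
  have r2 : R + 1 < ε * n := by
    have : (R + 1) / ε < n := by linarith
    rw [div_lt_iff₀ hε0] at this; linarith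
  have r3 : 8 * (R + L) < L * n := by
    have : 8 * (R + L) / L < n := by linarith
    rw [div_lt_iff₀ hL] at this; linarith
  have hn0 : 0 < (n:ℝ) := by linarith
  set t := ⌊δ * n⌋₊ with ht
  have ht1 : (t:ℝ) ≤ δ * n := Nat.floor_le (by positivity)
  have ht2 : δ * n < t + 1 := Nat.lt_floor_add_one _
  have ht3 : δ * n / 2 ≤ t := by linarith
  have htn : (t:ℝ) ≤ n := by nlinarith
  have ht0 : 1 ≤ t := by
    have : (1:ℝ) < t := by linarith
    exact_mod_cast this.le
  have hCt : C * t + L * t ≤ L * n / 8 := by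
    have : (C + L) * t ≤ (C + L) * (δ * n) := by gcongr
    have h2 : (C + L) * δ * n ≤ L / 8 * n := by gcongr
    linarith
  have hCt0 : 0 ≤ C * t := by positivity
  have hLt0 : 0 ≤ L * t := by positivity
  have hηt : B * (ε * n) + 6 * (ε * n) ≤ η * t := by
    have : η * (δ * n / 2) ≤ η * t := by gcongr
    have h2 : (B + 6) * ε * n ≤ η * δ / 2 * n := by gcongr
    linarith
  have hεLn : 3 * (ε * n) ≤ L * n / 8 := by
    have : 3 * ε * n ≤ L / 8 * n := by gcongr
    linarith
  have hεt : ε * t ≤ ε * n := by gcongr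
  -- the block
  obtain ⟨m, l, hml, hm1, hm2⟩ : ∃ m l : ℕ, m + l = 2 * n ∧ n ≤ 2 * m ∧ 2 * m ≤ n + 1 :=
    ⟨(n + 1) / 2, 2 * n - (n + 1) / 2, by omega, by omega, by omega⟩
  have hm2r : 2 * (m:ℝ) ≤ n + 1 := by exact_mod_cast hm2
  have hmn : m ≤ n := by
    have : (1:ℝ) ≤ n := by linarith
    have : 1 ≤ n := by exact_mod_cast this
    omega
  obtain ⟨zm, hzm⟩ := hmove t ht0
  obtain ⟨w, hw1, hw2, hw3⟩ := hplace t zm (L * n) (-((B + 1) * (ε * n)))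
  have hwY : Y (F^[t] w) - Y w = Y (F^[t] zm) - Y zm := by
    rw [← map_sub, ← map_sub, hw3]
  set h := C * t + (γ + 1) * (3 * n) + 1 with hh
  obtain ⟨d, hd1, hd2⟩ := hsurj 0 (-h)
  have hh0 : 0 < h := by positivity
  rw [abs_le] at hw1 hw2
  have hγY : ∀ s : ℝ, Y (w + s • d) = Y w - s * h := by
    intro s; rw [map_add, map_smul, hd2, smul_eq_mul]; ring
  have hγX : ∀ s : ℝ, X (w + s • d) = X w := by
    intro s; rw [map_add, map_smul, hd1, smul_eq_mul]; ring
  have hblk : ∀ j, m ≤ j → j ≤ m + l → (j:ℝ) ≤ 2 * n := by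
    intro j _ h2
    rw [hml] at h2
    exact_mod_cast h2
  have hBε : 0 < B * (ε * n) := by positivity
  obtain ⟨s, hs, x, hxA, hx⟩ := crossing (fun z => -Y z) X (by fun_prop) (by fun_prop)
    (fun x y h1 h2 => hinj x y h2 (by simpa using h1))
    ((F^[t]) '' {z | ∃ j, m ≤ j ∧ j ≤ m + l ∧ ∃ u ∈ U, z = F^[j] u})
    ((block_connected F hF U hU hmeet m l).image _ (hF.iterate _).continuousOn)
    (fun s => F^[t] (w + s • d)) ((hF.iterate t).comp (by fun_prop))
    (-(3 * (ε * n)) - 1/2) ((γ + 1) * (3 * n) + 1/2)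
    (L * n - R - C * t - L / 4) (L * n + R + C * t + L / 4)
    (by
      intro s hs
      have h1 := hX t (w + s • d)
      rw [hγX, abs_le] at h1
      constructor <;> linarith)
    (by
      rintro _ ⟨_, ⟨j, hj1, hj2, x, hx, rfl⟩, rfl⟩
      have h1 := hN (t + j) (by omega) x hx
      rw [Function.iterate_add_apply] at h1
      push_cast at h1
      have hj := hblk j hj1 hj2
      have h2 : ε * j ≤ ε * (2 * n) := by gcongr
      have h3 : (γ + ε) * (t + j) ≤ (γ + 1) * (3 * n) := by
        have : (t:ℝ) + j ≤ 3 * n := by linarith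
        gcongr
      constructor <;> linarith [h1.2.1, h1.2.2])
    ⟨_, mem_image_of_mem _ ⟨m, le_rfl, by omega, z, hz, rfl⟩, by
      rw [← Function.iterate_add_apply]
      have := (hN (t + m) (by omega) z hz).1
      push_cast at this
      have h1 : L * (2 * m) ≤ L * (n + 1) := by gcongr
      have h2 : ε * m ≤ ε * (2 * n) := by
        gcongr; exact hblk m le_rfl (by omega)
      rw [abs_le] at this; linarith⟩
    ⟨_, mem_image_of_mem _ ⟨m + l, by omega, le_rfl, z, hz, rfl⟩, by
      rw [← Function.iterate_add_apply, hml]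
      have := (hN (t + 2 * n) (by omega) z hz).1
      push_cast at this
      rw [abs_le] at this; linarith⟩
    (by
      simp only [zero_smul, add_zero]
      linarith)
    (by
      have h1 := hY t (w + (1:ℝ) • d)
      rw [hγY, abs_le] at h1
      try dsimp only
      linarith)
  obtain ⟨j, hj1, hj2, u, hu, rfl⟩ := hxA
  try dsimp only at hx
  have hx' := hFi.iterate t hx
  have h1 := (hN j (by omega) u hu).1
  have hj := hblk j hj1 hj2
  have h2 : ε * j ≤ ε * (2 * n) := by gcongr
  rw [hx', hγX, abs_le] at h1
  have hYn : -(2 * (ε * n)) ≤ Y (F^[n] u) := by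
    have := hN' n hnN' u hu z hz
    linarith
  have hjn : |(j:ℝ) - n| ≤ 3 * (ε * n) / L := by
    rw [le_div_iff₀ hL, show |(j:ℝ) - n| * L = |((j:ℝ) - n) * L| by rw [abs_mul, abs_of_pos hL], abs_le]
    constructor <;> linarith
  have hYj : |Y (F^[j] u) - Y (F^[n] u)| ≤ C * |(j:ℝ) - n| := by
    rcases le_total n j with hle | hle
    · obtain ⟨k, rfl⟩ := Nat.exists_eq_add_of_le' hle
      have := hY k (F^[n] u)
      rw [Function.iterate_add_apply]
      push_cast
      simpa using this
    · obtain ⟨k, rfl⟩ := Nat.exists_eq_add_of_le' hle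
      have := hY k (F^[j] u)
      rw [Function.iterate_add_apply, abs_sub_comm, abs_sub_comm (j:ℝ)]
      push_cast
      simpa using this
  have hfin : C * |(j:ℝ) - n| ≤ (B - 3) * (ε * n) := by
    calc C * |(j:ℝ) - n| ≤ C * (3 * (ε * n) / L) := by gcongr
      _ = (B - 3) * (ε * n) := by rw [hB]; field_simp; ring
  rw [hx', hγY, abs_le] at hYj
  have h3 : 0 ≤ s * h := mul_nonneg hs.1 hh0.le
  linarith [hYj.1]

lemma iter_add {G : E 2 → E 2} (hG : ∀ z : E 2, ∀ m ∈ ZLat 2, G (z + m) = G z + m) (n : ℕ) :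
    ∀ z : E 2, ∀ m ∈ ZLat 2, G^[n] (z + m) = G^[n] z + m := by
  induction n with
  | zero => intro z m _; rfl
  | succ n ih =>
    intro z m hm
    rw [Function.iterate_succ_apply, Function.iterate_succ_apply, hG z m hm, ih _ m hm]

/-- Every vector is at bounded distance from the lattice. -/
lemma lat_near (p : E 2) : ∃ m ∈ ZLat 2, ‖p - m‖ ≤ 2 := by
  refine ⟨!₂[(⌊p 0⌋ : ℝ), (⌊p 1⌋ : ℝ)], ?_, ?_⟩
  · intro i
    fin_cases i
    · exact ⟨⌊p 0⌋, rfl⟩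
    · exact ⟨⌊p 1⌋, rfl⟩
  · rw [EuclideanSpace.norm_eq]
    apply Real.sqrt_le_iff.2
    refine ⟨by norm_num, ?_⟩
    simp only [Fin.sum_univ_two, Real.norm_eq_abs, sq_abs, PiLp.sub_apply]
    simp only [Matrix.cons_val_zero, Matrix.cons_val_one]
    have h0 := Int.floor_le (p 0)
    have h1 := Int.floor_le (p 1)
    have h2 := Int.lt_floor_add_one (p 0)
    have h3 := Int.lt_floor_add_one (p 1)
    nlinarith

lemma disp_bound {G : E 2 → E 2} (hc : Continuous G)
    (hG : ∀ z : E 2, ∀ m ∈ ZLat 2, G (z + m) = G z + m) :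
    ∃ D > 0, ∀ (n : ℕ) z, ‖G^[n] z - z‖ ≤ D * n := by
  have hcomp : IsCompact (closedBall (0 : E 2) 2) := isCompact_closedBall _ _
  obtain ⟨D, hD⟩ := hcomp.exists_bound_of_continuousOn
    (f := fun z => G z - z) (hc.sub continuous_id).continuousOn
  have h1 : ∀ z, ‖G z - z‖ ≤ |D| + 1 := by
    intro z
    obtain ⟨m, hm, hz⟩ := lat_near z
    have h2 := hD (z - m) (by simpa using hz)
    have h3 := hG (z - m) m hm
    rw [sub_add_cancel] at h3
    rw [h3]
    have : G (z - m) + m - z = G (z - m) - (z - m) := by abel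
    rw [this]
    exact h2.trans ((le_abs_self D).trans (by linarith))
  refine ⟨|D| + 1, by positivity, ?_⟩
  intro n
  induction n with
  | zero => intro z; simp
  | succ n ih =>
    intro z
    rw [Function.iterate_succ_apply]
    have : G^[n] (G z) - z = (G^[n] (G z) - G z) + (G z - z) := by abel
    rw [this]
    refine (norm_add_le _ _).trans ?_
    have := ih (G z)
    have := h1 z
    push_cast
    linarith

lemma place {G : E 2 → E 2} (hG : ∀ z : E 2, ∀ m ∈ ZLat 2, G (z + m) = G z + m)
    (X Y : E 2 →L[ℝ] ℝ) (hsurj : ∀ x y, ∃ d, X d = x ∧ Y d = y) (R : ℝ)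
    (h1 : ‖X‖ * 2 ≤ R) (h2 : ‖Y‖ * 2 ≤ R) :
    ∀ (t : ℕ) z x y, ∃ w, |X w - x| ≤ R ∧ |Y w - y| ≤ R ∧ G^[t] w - w = G^[t] z - z := by
  intro t z x y
  obtain ⟨d, rfl, rfl⟩ := hsurj x y
  obtain ⟨m, hm, hp⟩ := lat_near (d - z)
  have hw : ‖(z + m) - d‖ ≤ 2 := by
    rw [norm_sub_rev]
    have : d - (z + m) = d - z - m := by abel
    rw [this]
    exact hp
  refine ⟨z + m, ?_, ?_, ?_⟩
  · rw [← map_sub, ← Real.norm_eq_abs]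
    refine (X.le_opNorm _).trans (le_trans ?_ h1)
    gcongr
  · rw [← map_sub, ← Real.norm_eq_abs]
    refine (Y.le_opNorm _).trans (le_trans ?_ h2)
    gcongr
  · rw [iter_add hG t z m hm]; abel

/-- Extraction of rotation vectors along long orbit segments. -/
lemma extract {G : E 2 → E 2} {D : ℝ} (hD : ∀ (n : ℕ) z, ‖G^[n] z - z‖ ≤ D * n)
    (W : Set (E 2)) (n : ℕ → ℕ) (hn : Tendsto n atTop atTop) (z : ℕ → E 2) (hz : ∀ i, z i ∈ W) :
    ∃ ρ ∈ rotRel G W, ∃ k : ℕ → ℕ, StrictMono k ∧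
      Tendsto (fun i => (n (k i) : ℝ)⁻¹ • (G^[n (k i)] (z (k i)) - z (k i))) atTop (𝓝 ρ) := by
  have hD0 : 0 ≤ D := by
    have := (norm_nonneg _).trans (hD 1 0)
    simpa using this
  have hcomp : IsCompact (closedBall (0 : E 2) D) := isCompact_closedBall _ _
  obtain ⟨ρ, -, k, hk, hlim⟩ := hcomp.tendsto_subseq
    (x := fun i => (n i : ℝ)⁻¹ • (G^[n i] (z i) - z i)) (by
      intro i
      simp only [mem_closedBall, dist_zero_right, norm_smul, norm_inv, RCLike.norm_natCast]
      have h := hD (n i) (z i)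
      rcases Nat.eq_zero_or_pos (n i) with h0 | h0
      · simp [h0, hD0]
      · have : (0:ℝ) < n i := by exact_mod_cast h0
        rw [inv_mul_le_iff₀ this]
        linarith)
  exact ⟨ρ, ⟨fun i => n (k i), fun i => z (k i), hn.comp hk.tendsto_atTop, fun i => hz _, hlim⟩,
    k, hk, hlim⟩

lemma rot_upper {G : E 2 → E 2} {D : ℝ} (hD : ∀ (n : ℕ) z, ‖G^[n] z - z‖ ≤ D * n)
    (W : Set (E 2)) (φ : E 2 →L[ℝ] ℝ) (c : ℝ) (hφ : ∀ ρ ∈ rotRel G W, φ ρ ≤ c) :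
    ∀ ε > 0, ∃ N : ℕ, ∀ n ≥ N, ∀ z ∈ W, φ (G^[n] z) - φ z ≤ (c + ε) * n := by
  intro ε hε
  by_contra! hcon
  choose n hn z hz hlt using hcon
  obtain ⟨ρ, hρ, k, hk, hlim⟩ := extract hD W n (tendsto_atTop_mono hn tendsto_id) z hz
  have h1 := hφ ρ hρ
  have h2 := (φ.continuous.tendsto ρ).comp hlim
  have h3 : c + ε ≤ φ ρ := by
    refine ge_of_tendsto h2 ?_
    filter_upwards [eventually_ge_atTop 1] with i hi
    have h4 : 1 ≤ n (k i) := by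
      have := hn (k i)
      have := hk.le_apply (x := i)
      omega
    have h5 : (0:ℝ) < n (k i) := by exact_mod_cast h4
    have h6 := hlt (k i)
    simp only [Function.comp, map_smul, map_sub, smul_eq_mul]
    rw [le_inv_mul_iff₀ h5]
    linarith
  linarith

lemma mover {G : E 2 → E 2} {D : ℝ} (hD : ∀ (n : ℕ) z, ‖G^[n] z - z‖ ≤ D * n)
    (φ : E 2 →L[ℝ] ℝ) (c : ℝ) (ρ : E 2) (hρ : ρ ∈ rotSet G) (hc : c < φ ρ) :
    ∀ t : ℕ, 1 ≤ t → ∃ z, c * t ≤ φ (G^[t] z) - φ z := by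
  intro t ht
  by_contra! hcon
  have hq : ∀ (q : ℕ) z, φ (G^[t * q] z) - φ z ≤ c * t * q := by
    intro q
    induction q with
    | zero => intro z; simp
    | succ q ih =>
      intro z
      rw [Nat.mul_succ, add_comm, Function.iterate_add_apply]
      have h1 := hcon (G^[t * q] z)
      have h2 := ih z
      push_cast
      linarith
  have hD0 : 0 ≤ D := by
    have := (norm_nonneg _).trans (hD 1 0)
    simpa using this
  set K : ℝ := |c| * t + ‖φ‖ * (D * t) with hK
  have hall : ∀ (n : ℕ) z, φ (G^[n] z) - φ z ≤ c * n + K := by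
    intro n z
    have h1 : n % t + t * (n / t) = n := Nat.mod_add_div n t
    have h2 : ((n % t : ℕ) : ℝ) ≤ t := by exact_mod_cast (Nat.mod_lt n ht).le
    have h3 := hq (n / t) z
    have h4 : φ (G^[n] z) - φ (G^[t * (n / t)] z) ≤ ‖φ‖ * (D * t) := by
      conv_lhs => rw [← h1]
      rw [h1, ← h1, Function.iterate_add_apply, h1, ← map_sub]
      refine (le_abs_self _).trans ((φ.le_opNorm _).trans ?_)
      gcongr
      exact (hD _ _).trans (by gcongr)
    have h5 : (n:ℝ) = (n % t : ℕ) + t * (n / t : ℕ) := by exact_mod_cast h1.symm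
    have h6 : -(|c| * t) ≤ c * (n % t : ℕ) := by
      have : |c * (n % t : ℕ)| ≤ |c| * t := by
        rw [abs_mul, Nat.abs_cast]; gcongr
      exact (abs_le.1 this).1
    rw [h5, hK]
    linarith
  obtain ⟨n, z, hn, -, hlim⟩ := hρ
  have h2 := (φ.continuous.tendsto ρ).comp hlim
  have hn' : Tendsto (fun i => (n i : ℝ)) atTop atTop := tendsto_natCast_atTop_atTop.comp hn
  have h3 : Tendsto (fun i => c + (n i : ℝ)⁻¹ * K) atTop (𝓝 (c + 0 * K)) :=
    (hn'.inv_tendsto_atTop.mul_const K).const_add c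
  have h4 := le_of_tendsto_of_tendsto h2 h3 (by
    filter_upwards [hn.eventually_ge_atTop 1] with i hi
    have h5 : (0:ℝ) < n i := by exact_mod_cast hi
    simp only [Function.comp, map_smul, map_sub, smul_eq_mul]
    rw [inv_mul_le_iff₀ h5]
    have := hall (n i) (z i)
    field_simp
    linarith)
  linarith

lemma up_lemma {G : E 2 → E 2} (hc : Continuous G) (hi : Function.Injective G)
    (hG : ∀ z : E 2, ∀ m ∈ ZLat 2, G (z + m) = G z + m)
    (U : Set (E 2)) (hUb : Bornology.IsBounded U) (hU : IsConnected U)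
    (hmeet : (G '' U ∩ U).Nonempty)
    (X Y : E 2 →L[ℝ] ℝ) (hinj : ∀ x y, X x = X y → Y x = Y y → x = y)
    (hsurj : ∀ x y, ∃ d, X d = x ∧ Y d = y) (L : ℝ) (hL : 0 < L) (γ : ℝ) (hγ : 0 ≤ γ)
    (hX : ∀ ρ ∈ rotRel G U, X ρ = L) (hY : ∀ ρ ∈ rotRel G U, -γ ≤ Y ρ ∧ Y ρ ≤ 0)
    (htop : ∃ ρ ∈ rotRel G U, Y ρ = 0) : ∀ ρ ∈ rotSet G, Y ρ ≤ 0 := by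
  intro ρ hρ
  by_contra! hpos
  obtain ⟨D, hD0, hD⟩ := disp_bound hc hG
  obtain ⟨M, hM⟩ := hUb.exists_norm_le
  have hM0 : 0 ≤ M := by
    obtain ⟨u, hu⟩ := hU.nonempty
    exact (norm_nonneg u).trans (hM u hu)
  have hCX : ∀ (φ : E 2 →L[ℝ] ℝ) (n : ℕ) z, |φ (G^[n] z) - φ z| ≤ ‖φ‖ * D * n := by
    intro φ n z
    rw [← map_sub, ← Real.norm_eq_abs, mul_assoc]
    refine (φ.le_opNorm _).trans ?_
    gcongr
    exact hD n z
  -- upper bounds on `U` without the base point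
  have hup : ∀ (φ : E 2 →L[ℝ] ℝ) (c : ℝ), (∀ ρ ∈ rotRel G U, φ ρ ≤ c) →
      ∀ ε > 0, ∃ N : ℕ, ∀ n ≥ N, ∀ z ∈ U, φ (G^[n] z) ≤ (c + ε) * n := by
    intro φ c h ε hε
    obtain ⟨N, hN⟩ := rot_upper hD U φ c h (ε / 2) (by positivity)
    obtain ⟨N', hN'⟩ := exists_nat_gt (‖φ‖ * M / (ε / 2))
    refine ⟨max N N', fun n hn z hz => ?_⟩
    have h1 := hN n (le_trans (le_max_left _ _) hn) z hz
    have h2 : (N' : ℝ) ≤ n := by exact_mod_cast le_trans (le_max_right _ _) hn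
    have h3 : φ z ≤ ‖φ‖ * M := by
      refine (le_abs_self _).trans ((φ.le_opNorm z).trans ?_)
      gcongr
      exact hM z hz
    rw [div_lt_iff₀ (by positivity)] at hN'
    have h4 : (N':ℝ) * (ε / 2) ≤ n * (ε / 2) := by gcongr
    linarith
  obtain ⟨C, hC0, hCX', hCY'⟩ : ∃ C > 0, ‖X‖ * D ≤ C ∧ ‖Y‖ * D ≤ C :=
    ⟨‖X‖ * D + ‖Y‖ * D + 1, by positivity,
      by have : 0 ≤ ‖Y‖ * D := by positivity
         linarith,
      by have : 0 ≤ ‖X‖ * D := by positivity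
         linarith⟩
  obtain ⟨R, hR0, hRX, hRY⟩ : ∃ R > 0, ‖X‖ * 2 ≤ R ∧ ‖Y‖ * 2 ≤ R :=
    ⟨‖X‖ * 2 + ‖Y‖ * 2 + 1, by positivity,
      by have : 0 ≤ ‖Y‖ * 2 := by positivity
         linarith,
      by have : 0 ≤ ‖X‖ * 2 := by positivity
         linarith⟩
  have hXC : ∀ (n : ℕ) z, |X (G^[n] z) - X z| ≤ C * n := fun n z =>
    (hCX X n z).trans (by gcongr)
  have hYC : ∀ (n : ℕ) z, |Y (G^[n] z) - Y z| ≤ C * n := fun n z =>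
    (hCX Y n z).trans (by gcongr)
  have hUL : ∀ ε > 0, ∃ N : ℕ, ∀ n ≥ N, ∀ z ∈ U, |X (G^[n] z) - L * n| ≤ ε * n ∧
      Y (G^[n] z) ≤ ε * n ∧ -((γ + ε) * n) ≤ Y (G^[n] z) := by
    intro ε hε
    obtain ⟨N1, h1⟩ := hup X L (fun ρ h => (hX ρ h).le) ε hε
    obtain ⟨N2, h2⟩ := hup (-X) (-L) (fun ρ h => by simp [hX ρ h]) ε hε
    obtain ⟨N3, h3⟩ := hup Y 0 (fun ρ h => (hY ρ h).2) ε hε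
    obtain ⟨N4, h4⟩ := hup (-Y) γ (fun ρ h => by
      have := (hY ρ h).1
      simp only [neg_apply]; linarith) ε hε
    refine ⟨N1 + N2 + N3 + N4, fun n hn z hz => ?_⟩
    have h1 := h1 n (by omega) z hz
    have h2 := h2 n (by omega) z hz
    have h3 := h3 n (by omega) z hz
    have h4 := h4 n (by omega) z hz
    simp only [neg_apply] at h2 h4
    refine ⟨abs_le.2 ⟨by linarith, by linarith⟩, by linarith, by linarith⟩
  have hplace := place hG X Y hsurj R hRX hRY
  have hmove : ∀ t : ℕ, 1 ≤ t → ∃ z, Y ρ / 2 * t ≤ Y (G^[t] z) - Y z :=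
    mover hD Y (Y ρ / 2) ρ hρ (by linarith)
  by_cases hshort : ∀ ε > 0, ∃ N : ℕ, ∀ n ≥ N, ∀ z ∈ U, ∀ z' ∈ U,
      Y (G^[n] z') - Y (G^[n] z) ≤ ε * n
  · refine caseB G hc hi X Y hinj hsurj C R hC0 hR0 hXC hYC hplace U hU hmeet L hL γ hγ hUL
      hshort ?_ (Y ρ / 2) (by linarith) hmove
    obtain ⟨σ, ⟨n, z, hn, hz, hlim⟩, hσ⟩ := htop
    intro ε hε N
    have h2 := (Y.continuous.tendsto σ).comp hlim
    rw [hσ] at h2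
    obtain ⟨N', hN'⟩ := exists_nat_gt (‖Y‖ * M / (ε / 2))
    obtain ⟨i, hi1, hi2⟩ := ((h2.eventually (lt_mem_nhds (show -(ε / 2) < 0 by linarith))).and
      (hn.eventually_ge_atTop (max N N' + 1))).exists
    have hh1 := le_max_left N N'
    have hh2 := le_max_right N N'
    refine ⟨n i, by omega, z i, hz i, ?_⟩
    have h5 : (0:ℝ) < n i := by exact_mod_cast (by omega : 0 < n i)
    simp only [Function.comp, map_smul, map_sub, smul_eq_mul] at hi1
    rw [lt_inv_mul_iff₀ h5] at hi1
    have h6 : (N' : ℝ) ≤ n i := by exact_mod_cast (by omega : N' ≤ n i)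
    have h3 : -(‖Y‖ * M) ≤ Y (z i) := by
      have : |Y (z i)| ≤ ‖Y‖ * M := by
        refine (Y.le_opNorm _).trans ?_
        gcongr
        exact hM _ (hz i)
      exact (abs_le.1 this).1
    rw [div_lt_iff₀ (by positivity)] at hN'
    have h4 : (N':ℝ) * (ε / 2) ≤ n i * (ε / 2) := by gcongr
    linarith
  · push Not at hshort
    obtain ⟨c, hc0, hlong⟩ := hshort
    have hlong' : ∀ N : ℕ, ∃ n ≥ N, ∃ z ∈ U, ∃ z' ∈ U, c * n ≤ Y (G^[n] z') - Y (G^[n] z) := by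
      intro N
      obtain ⟨n, hn, z, hz, z', hz', h⟩ := hlong N
      exact ⟨n, hn, z, hz, z', hz', h.le⟩
    by_cases hall : ∀ σ ∈ rotSet G, X σ = L
    · refine caseC G hc hi X Y hinj hsurj C R hC0 hR0 hYC hplace U hU hmeet L hL γ hγ hUL
        ?_ (Y ρ / 2) (by linarith) hmove
      intro ε hε
      obtain ⟨N1, h1⟩ := rot_upper hD univ X L (fun ρ h => (hall ρ h).le) ε hε
      obtain ⟨N2, h2⟩ := rot_upper hD univ (-X) (-L) (fun ρ h => by simp [hall ρ h]) ε hε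
      refine ⟨N1 + N2, fun n hn z => ?_⟩
      have h1 := h1 n (by omega) z trivial
      have h2 := h2 n (by omega) z trivial
      simp only [neg_apply] at h2
      exact abs_le.2 ⟨by linarith, by linarith⟩
    · push Not at hall
      obtain ⟨σ, hσ, hne⟩ := hall
      rcases lt_or_gt_of_ne hne with hlt | hgt
      · refine caseA G hc hi (-X) Y (fun x y h h' => hinj x y (by simpa using h) h')
          (fun x y => (hsurj (-x) y).imp fun d h => ⟨by simp [h.1], h.2⟩) C R hC0 hR0
          (fun n z => by
            have := hXC n z
            simp only [neg_apply]
            rw [abs_le] at this ⊢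
            exact ⟨by linarith, by linarith⟩) hYC
          (place hG (-X) Y (fun x y => (hsurj (-x) y).imp fun d h => ⟨by simp [h.1], h.2⟩) R
            (by simpa using hRX) hRY) U hU (-L) ?_ c hc0 hlong' ((L - X σ) / 2) (by linarith) ?_
        · intro ε hε
          obtain ⟨N, hN⟩ := hUL ε hε
          refine ⟨N, fun n hn z hz => ?_⟩
          have := (hN n hn z hz).1
          simp only [neg_apply]
          rw [abs_le] at this ⊢
          exact ⟨by linarith, by linarith⟩
        · intro t ht
          obtain ⟨z, hz⟩ := mover hD (-X) (-L + (L - X σ) / 2) σ hσ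
            (by simp only [neg_apply]; linarith) t ht
          exact ⟨z, by linarith⟩
      · refine caseA G hc hi X Y hinj hsurj C R hC0 hR0 hXC hYC hplace U hU L ?_ c hc0 hlong'
          ((X σ - L) / 2) (by linarith) ?_
        · intro ε hε
          obtain ⟨N, hN⟩ := hUL ε hε
          exact ⟨N, fun n hn z hz => (hN n hn z hz).1⟩
        · intro t ht
          obtain ⟨z, hz⟩ := mover hD X (L + (X σ - L) / 2) σ hσ (by linarith) t ht
          exact ⟨z, by linarith⟩

/-- `⟨·, v⟩` as a continuous linear functional. -/
def sdotL (v : E 2) : E 2 →L[ℝ] ℝ :=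
  v 0 • EuclideanSpace.proj (0 : Fin 2) + v 1 • EuclideanSpace.proj (1 : Fin 2)

/-- `⟨·, v^⊥⟩` as a continuous linear functional. -/
def pdotL (v : E 2) : E 2 →L[ℝ] ℝ :=
  v 0 • EuclideanSpace.proj (1 : Fin 2) - v 1 • EuclideanSpace.proj (0 : Fin 2)

lemma sdotL_apply (v z : E 2) : sdotL v z = sdot v z := by
  simp [sdotL, sdot, mul_comm]

lemma pdotL_apply (v z : E 2) : pdotL v z = pdot v z := by
  simp [pdotL, pdot, mul_comm]

lemma dot_inj {v x y : E 2} (hv : 0 < sdot v v) (h1 : sdot v x = sdot v y)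
    (h2 : pdot v x = pdot v y) : x = y := by
  unfold sdot at hv h1
  unfold pdot at h2
  have e0 : (x 0 - y 0) * (v 0 * v 0 + v 1 * v 1) = 0 := by
    linear_combination v 0 * h1 - v 1 * h2
  have e1 : (x 1 - y 1) * (v 0 * v 0 + v 1 * v 1) = 0 := by
    linear_combination v 1 * h1 + v 0 * h2
  ext i
  fin_cases i
  · exact sub_eq_zero.1 ((mul_eq_zero.1 e0).resolve_right hv.ne')
  · exact sub_eq_zero.1 ((mul_eq_zero.1 e1).resolve_right hv.ne')

lemma dot_surj {v : E 2} (hv : 0 < sdot v v) (x y : ℝ) : ∃ d, sdot v d = x ∧ pdot v d = y := by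
  unfold sdot at hv
  have hv' := hv.ne'
  refine ⟨!₂[(x * v 0 - y * v 1) / (v 0 * v 0 + v 1 * v 1),
    (x * v 1 + y * v 0) / (v 0 * v 0 + v 1 * v 1)], ?_, ?_⟩
  · simp only [sdot, Matrix.cons_val_zero, Matrix.cons_val_one]
    rw [div_mul_eq_mul_div, div_mul_eq_mul_div, ← add_div, div_eq_iff hv']
    ring
  · simp only [pdot, Matrix.cons_val_zero, Matrix.cons_val_one]
    rw [div_mul_eq_mul_div, div_mul_eq_mul_div, ← sub_div, div_eq_iff hv']
    ring

lemma coneC_convex (v : E 2) (a b : ℝ) : Convex ℝ (coneC v a b) := by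
  intro x hx y hy s t hs ht _
  obtain ⟨h1, h2⟩ := hx
  obtain ⟨h3, h4⟩ := hy
  have e1 : sdot v (s • x + t • y) = s * sdot v x + t * sdot v y := by
    simp [← sdotL_apply]
  have e2 : pdot v (s • x + t • y) = s * pdot v x + t * pdot v y := by
    simp [← pdotL_apply]
  have m1 := mul_le_mul_of_nonneg_left h1 hs
  have m2 := mul_le_mul_of_nonneg_left h2 hs
  have m3 := mul_le_mul_of_nonneg_left h3 ht
  have m4 := mul_le_mul_of_nonneg_left h4 ht
  constructor
  · rw [e1, e2]; linarith
  · rw [e1, e2]; linarith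

lemma rot_nonempty {G : E 2 → E 2} (hc : Continuous G)
    (hG : ∀ z : E 2, ∀ m ∈ ZLat 2, G (z + m) = G z + m) (U : Set (E 2)) (hU : U.Nonempty) :
    (rotRel G U).Nonempty := by
  obtain ⟨D, -, hD⟩ := disp_bound hc hG
  obtain ⟨u, hu⟩ := hU
  obtain ⟨ρ, hρ, -⟩ := extract hD U id tendsto_id (fun _ => u) (fun _ => hu)
  exact ⟨ρ, hρ⟩

/-- **Lemma (extremal points lie in the cone).**
If `Û ⊆ ℝ²` is bounded and connected with `G(Û) ∩ Û ≠ ∅` and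
`ρ_Û(G) = L_{λ,v}[a,b]` with `λ ≠ 0`, then every extremal point of `ρ(G)` (extreme
point of its convex hull) belongs to `C_v[a,b]`. -/
theorem extremal_points_in_cone
    (G : E 2 ≃ₜ E 2) (g : T 2 ≃ₜ T 2) (hlift : IsLift G g)
    (Uh : Set (E 2)) (hUb : Bornology.IsBounded Uh) (hUc : IsConnected Uh)
    (hmeet : ((⇑G) '' Uh ∩ Uh).Nonempty)
    (lam : ℝ) (hlam : lam ≠ 0) (v : E 2) (hv : v ≠ 0) (a b : ℝ) (hab : a ≤ b)
    (hrot : rotRel (⇑G) Uh = lineSeg lam v a b) :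
    ∀ ρ ∈ Set.extremePoints ℝ (convexHull ℝ (rotSet (⇑G))), ρ ∈ coneC v a b := by
  have hG := hlift.2
  have hvv : 0 < sdot v v := by
    have h0 : 0 ≤ v 0 * v 0 := mul_self_nonneg _
    have h1 : 0 ≤ v 1 * v 1 := mul_self_nonneg _
    by_contra! hcon
    unfold sdot at hcon
    apply hv
    ext i
    fin_cases i
    · exact mul_self_eq_zero.1 (by linarith : v 0 * v 0 = 0)
    · exact mul_self_eq_zero.1 (by linarith : v 1 * v 1 = 0)
  obtain ⟨p, hp⟩ := rot_nonempty G.continuous hG Uh hUc.nonempty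
  have key : ∀ s t k : ℝ, s ≠ 0 → t ≠ 0 → 0 < s * (lam * sdot v v) → ∀ γ : ℝ, 0 ≤ γ →
      (∀ ρ ∈ rotRel (⇑G) Uh, -γ ≤ t * (pdot v ρ - k * sdot v ρ) ∧
        t * (pdot v ρ - k * sdot v ρ) ≤ 0) →
      (∃ ρ ∈ rotRel (⇑G) Uh, t * (pdot v ρ - k * sdot v ρ) = 0) →
      ∀ ρ ∈ rotSet (⇑G), t * (pdot v ρ - k * sdot v ρ) ≤ 0 := by
    intro s t k hs ht hL γ hγ hY htop ρ hρ
    have hXe : ∀ z, (s • sdotL v) z = s * sdot v z := fun z => by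
      rw [smul_apply, sdotL_apply, smul_eq_mul]
    have hYe : ∀ z, (t • (pdotL v - k • sdotL v)) z = t * (pdot v z - k * sdot v z) := fun z => by
      rw [smul_apply, sub_apply, smul_apply, sdotL_apply, pdotL_apply, smul_eq_mul, smul_eq_mul]
    have h := up_lemma G.continuous G.injective hG Uh hUb hUc hmeet (s • sdotL v)
      (t • (pdotL v - k • sdotL v)) ?_ ?_ (s * (lam * sdot v v)) hL γ hγ ?_ ?_ ?_ ρ hρ
    · rwa [hYe] at h
    · intro x y h1 h2
      rw [hXe, hXe] at h1
      rw [hYe, hYe] at h2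
      have h1 := mul_left_cancel₀ hs h1
      have h2 := mul_left_cancel₀ ht h2
      rw [h1] at h2
      exact dot_inj hvv h1 (by linarith)
    · intro x y
      obtain ⟨d, h1, h2⟩ := dot_surj hvv (x / s) (y / t + k * (x / s))
      refine ⟨d, ?_, ?_⟩
      · rw [hXe, h1]; field_simp
      · rw [hYe, h1, h2]; field_simp; ring
    · intro σ hσ
      rw [hrot] at hσ
      have : sdot v σ = lam * sdot v v := hσ.1
      rw [hXe, this]
    · intro σ hσ
      rw [hYe]
      exact hY σ hσ
    · obtain ⟨σ, hσ, h⟩ := htop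
      exact ⟨σ, hσ, by rw [hYe]; exact h⟩
  have hmem : ∀ ρ, ρ ∈ rotRel (⇑G) Uh ↔ sdot v ρ = lam * sdot v v ∧
      a * sdot v ρ ≤ pdot v ρ ∧ pdot v ρ ≤ b * sdot v ρ := by
    intro ρ; rw [hrot]; rfl
  have hsub : rotSet (⇑G) ⊆ coneC v a b := by
    rcases lt_or_gt_of_ne hlam with hneg | hpos
    · have hL : 0 < -1 * (lam * sdot v v) := by nlinarith
      have hab' : a = b := by
        obtain ⟨h1, h2, h3⟩ := (hmem p).1 hp
        rw [h1] at h2 h3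
        refine le_antisymm hab ?_
        by_contra! hlt
        nlinarith
      subst hab'
      have hz : ∀ ρ ∈ rotRel (⇑G) Uh, pdot v ρ - a * sdot v ρ = 0 := by
        intro ρ hρ
        obtain ⟨h1, h2, h3⟩ := (hmem ρ).1 hρ
        linarith
      intro ρ hρ
      have k1 := key (-1) 1 a (by norm_num) (by norm_num) hL 0 le_rfl
        (fun σ hσ => by rw [hz σ hσ]; simp) ⟨p, hp, by rw [hz p hp]; simp⟩ ρ hρ
      have k2 := key (-1) (-1) a (by norm_num) (by norm_num) hL 0 le_rfl
        (fun σ hσ => by rw [hz σ hσ]; simp) ⟨p, hp, by rw [hz p hp]; simp⟩ ρ hρ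
      exact ⟨by linarith, by linarith⟩
    · have hL : 0 < 1 * (lam * sdot v v) := by rw [one_mul]; positivity
      have hL' : 0 < lam * sdot v v := by positivity
      have hγ : 0 ≤ (b - a) * (lam * sdot v v) := mul_nonneg (by linarith) hL'.le
      obtain ⟨d, hd1, hd2⟩ := dot_surj hvv (lam * sdot v v) (b * (lam * sdot v v))
      obtain ⟨e, he1, he2⟩ := dot_surj hvv (lam * sdot v v) (a * (lam * sdot v v))
      have hd : d ∈ rotRel (⇑G) Uh := (hmem d).2
        ⟨hd1, by rw [hd1, hd2]; linarith, by rw [hd1, hd2]⟩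
      have he : e ∈ rotRel (⇑G) Uh := (hmem e).2
        ⟨he1, by rw [he1, he2], by rw [he1, he2]; linarith⟩
      intro ρ hρ
      have k1 := key 1 1 b (by norm_num) (by norm_num) hL _ hγ
        (fun σ hσ => by
          obtain ⟨h1, h2, h3⟩ := (hmem σ).1 hσ
          rw [h1] at h2 h3 ⊢
          exact ⟨by linarith, by linarith⟩) ⟨d, hd, by rw [hd1, hd2]; ring⟩ ρ hρ
      have k2 := key 1 (-1) a (by norm_num) (by norm_num) hL _ hγ
        (fun σ hσ => by
          obtain ⟨h1, h2, h3⟩ := (hmem σ).1 hσ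
          rw [h1] at h2 h3 ⊢
          exact ⟨by linarith, by linarith⟩) ⟨e, he, by rw [he1, he2]; ring⟩ ρ hρ
      exact ⟨by linarith, by linarith⟩
  intro ρ hρ
  exact convexHull_min hsub (coneC_convex v a b) hρ.1
end
end

section
/- Let G : ℝ² → ℝ² be a lift of a homeomorphism g of the two-torus homotopic to the identity, let Û ⊆ ℝ² be bounded and connected with G(Û) ∩ Û ≠ ∅, let λ ≠ 0, v ∈ ℝ² \ {0} and a < b, and suppose ρ_Û(G) = L_{λ,v}[a,b]. Then there exist constants c > 0 and N' ∈ ℕ such that for all n ≥ N': sup_{z∈Û} ⟨G^n(z), v^⊥⟩ − inf_{z∈Û} ⟨G^n(z), v^⊥⟩ > c·n. -/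
noncomputable section
open Filter Topology Metric Set MeasureTheory

lemma ls_edge (θ : ℝ → ℝ) (hθ : Continuous θ) (c : ℝ) (h : ∀ t, θ t ≠ c) (s t : ℝ)
    (hs : θ s < c) : θ t < c := by
  by_contra hcon
  push Not at hcon
  obtain ⟨u, hu⟩ := mem_range_of_exists_le_of_exists_ge hθ ⟨s, hs.le⟩ ⟨t, hcon⟩
  exact h u hu

lemma ls_edge' (θ : ℝ → ℝ) (hθ : Continuous θ) (c : ℝ) (h : ∀ t, θ t ≠ c) (s t : ℝ)
    (hs : c < θ s) : c < θ t := by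
  by_contra hcon
  push Not at hcon
  obtain ⟨u, hu⟩ := mem_range_of_exists_le_of_exists_ge hθ ⟨t, hcon⟩ ⟨s, hs.le⟩
  exact h u hu

lemma ls_miranda (f : ℝ × ℝ → ℂ) (hf : Continuous f) (h0 : ∀ p, f p ≠ 0)
    (hl : ∀ t, (f (0, t)).im < 0) (hr : ∀ t, 0 < (f (1, t)).im)
    (hb : ∀ s, 0 < (f (s, 0)).re) (ht : ∀ s, (f (s, 1)).re < 0) : False := by
  obtain ⟨F, ⟨-, hF⟩, -⟩ := Complex.isCoveringMapOn_exp.existsUnique_continuousMap_lifts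
    (A := ℝ × ℝ) ⟨f, hf⟩ (a₀ := (0, 0)) (Complex.exp_log (h0 (0, 0))) (fun p => h0 p)
  have hF' : ∀ p, Complex.exp (F p) = f p := fun p => congrFun hF p
  obtain ⟨k, hk⟩ : ∃ k : ℤ, (F (0,0)).im - k * (2 * Real.pi) ∈ Ico (-Real.pi) Real.pi := by
    obtain ⟨k, hk, -⟩ := existsUnique_sub_zsmul_mem_Ico (Real.two_pi_pos) (F (0,0)).im (-Real.pi)
    refine ⟨k, ?_⟩
    simpa [two_mul, mul_add] using hk
  set θ : ℝ × ℝ → ℝ := fun p => (F p).im - k * (2 * Real.pi) with hθ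
  have hθc : Continuous θ := by fun_prop
  have hre : ∀ p, (f p).re = Real.exp (F p).re * Real.cos (θ p) := by
    intro p
    rw [← hF', Complex.exp_re, hθ]; simp [Real.cos_sub_int_mul_two_pi]
  have him : ∀ p, (f p).im = Real.exp (F p).re * Real.sin (θ p) := by
    intro p
    rw [← hF', Complex.exp_im, hθ]; simp [Real.sin_sub_int_mul_two_pi]
  have pe := fun p => Real.exp_pos (F p).re
  have s0 : ∀ t, Real.sin (θ (0, t)) < 0 := fun t => by
    have := hl t; rw [him] at this; exact (pos_iff_neg_of_mul_neg this).1 (pe _)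
  have s1 : ∀ t, 0 < Real.sin (θ (1, t)) := fun t => by
    have := hr t; rw [him] at this; exact (pos_iff_pos_of_mul_pos this).1 (pe _)
  have t0 : ∀ s, 0 < Real.cos (θ (s, 0)) := fun t => by
    have := hb t; rw [hre] at this; exact (pos_iff_pos_of_mul_pos this).1 (pe _)
  have t1 : ∀ s, Real.cos (θ (s, 1)) < 0 := fun t => by
    have := ht t; rw [hre] at this; exact (pos_iff_neg_of_mul_neg this).1 (pe _)
  have pp := Real.pi_pos
  have hk1 : -Real.pi ≤ θ (0,0) := hk.1
  have hk2 : θ (0,0) < Real.pi := hk.2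
  have a1 : θ (0,0) < 0 := by
    by_contra h
    push Not at h
    exact absurd (Real.sin_nonneg_of_nonneg_of_le_pi h hk2.le) (not_le.2 (s0 0))
  have a2 : -(Real.pi/2) < θ (0,0) := by
    by_contra h
    push Not at h
    have := t0 0
    rw [← Real.cos_neg] at this
    exact absurd (Real.cos_nonpos_of_pi_div_two_le_of_le (x := - θ (0,0)) (by linarith) (by linarith)) (not_le.2 this)
  have cb : Continuous (fun s => θ (s, 0)) := by fun_prop
  have ct : Continuous (fun s => θ (s, 1)) := by fun_prop
  have cl : Continuous (fun s => θ (0, s)) := by fun_prop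
  have cr : Continuous (fun s => θ (1, s)) := by fun_prop
  have b1 : θ (1, 0) < Real.pi / 2 := ls_edge _ cb (Real.pi/2) (fun s h => by
    have := t0 s; rw [h] at this; simp at this) 0 1 (by linarith)
  have b2 : -(Real.pi / 2) < θ (1, 0) := ls_edge' _ cb (-(Real.pi/2)) (fun s h => by
    have := t0 s; rw [h] at this; simp at this) 0 1 (by linarith)
  have b3 : 0 < θ (1, 0) := by
    by_contra h
    push Not at h
    exact absurd (Real.sin_nonpos_of_nonpos_of_neg_pi_le h (by linarith)) (not_le.2 (s1 0))
  have c1 : 0 < θ (1, 1) := ls_edge' _ cr 0 (fun s h => by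
    have := s1 s; rw [h] at this; simp at this) 0 1 b3
  have c2 : Real.pi / 2 < θ (1, 1) := by
    by_contra h
    push Not at h
    exact absurd (Real.cos_nonneg_of_neg_pi_div_two_le_of_le (by linarith) h) (not_le.2 (t1 1))
  have d1 : Real.pi / 2 < θ (0, 1) := ls_edge' _ ct (Real.pi / 2) (fun s h => by
    have := t1 s; rw [h] at this; simp at this) 1 0 c2
  have d2 : θ (0, 1) < 0 := ls_edge _ cl 0 (fun s h => by
    have := s0 s; rw [h] at this; simp at this) 0 1 a1
  linarith

lemma ls_thick (V : Set (E 2)) (hV : IsConnected V) (δ : ℝ) (hδ : 0 < δ) :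
    IsPathConnected (thickening δ V) := by
  rw [← isOpen_thickening.isConnected_iff_isPathConnected]
  obtain ⟨x, hx⟩ := hV.nonempty
  refine ⟨⟨x, self_subset_thickening hδ V hx⟩, ?_⟩
  refine isPreconnected_of_forall x ?_
  intro y hy
  obtain ⟨z, hz, hyz⟩ := mem_thickening_iff.1 hy
  refine ⟨V ∪ ball z δ, ?_, Or.inl hx, Or.inr hyz, ?_⟩
  · exact union_subset (self_subset_thickening hδ V) (ball_subset_thickening hz δ)
  · exact hV.isPreconnected.union z hz (mem_ball_self hδ) (convex_ball z δ).isPreconnected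

lemma ls_cross (X Y : E 2 →L[ℝ] ℝ) (hinj : ∀ z, X z = 0 → Y z = 0 → z = 0)
    (V H : Set (E 2)) (hVc : IsCompact V) (hHc : IsCompact H) (hV : IsConnected V)
    (hH : IsConnected H) (pb pt pl pr : E 2) (hpb : pb ∈ V) (hpt : pt ∈ V) (hpl : pl ∈ H)
    (hpr : pr ∈ H) (h1 : ∀ h ∈ H, Y pb < Y h ∧ Y h < Y pt)
    (h2 : ∀ w ∈ V, X pl < X w ∧ X w < X pr) (hd : Disjoint V H) : False := by
  obtain ⟨d0, hd0, hdis⟩ := hd.exists_thickenings hVc hHc.isClosed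
  have oH : IsOpen {h : E 2 | Y pb < Y h ∧ Y h < Y pt} :=
    (isOpen_lt continuous_const Y.continuous).inter (isOpen_lt Y.continuous continuous_const)
  have oV : IsOpen {h : E 2 | X pl < X h ∧ X h < X pr} :=
    (isOpen_lt continuous_const X.continuous).inter (isOpen_lt X.continuous continuous_const)
  obtain ⟨d1, hd1, hs1⟩ := hHc.exists_thickening_subset_open oH h1
  obtain ⟨d2, hd2, hs2⟩ := hVc.exists_thickening_subset_open oV h2
  obtain ⟨α, hα⟩ := ((ls_thick V hV (min d0 d2) (lt_min hd0 hd2)).joinedIn pb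
    (self_subset_thickening (lt_min hd0 hd2) V hpb) pt (self_subset_thickening (lt_min hd0 hd2) V hpt))
  obtain ⟨β, hβ⟩ := ((ls_thick H hH (min d0 d1) (lt_min hd0 hd1)).joinedIn pl
    (self_subset_thickening (lt_min hd0 hd1) H hpl) pr (self_subset_thickening (lt_min hd0 hd1) H hpr))
  have hα' : ∀ s, α.extend s ∈ thickening (min d0 d2) V := fun s => by
    have : α.extend s ∈ range α := by rw [← α.extend_range]; exact mem_range_self s
    obtain ⟨u, hu⟩ := this
    rw [← hu]; exact hα u
  have hβ' : ∀ s, β.extend s ∈ thickening (min d0 d1) H := fun s => by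
    have : β.extend s ∈ range β := by rw [← β.extend_range]; exact mem_range_self s
    obtain ⟨u, hu⟩ := this
    rw [← hu]; exact hβ u
  have hα2 := fun s => hs2 (thickening_mono (min_le_right _ _) _ (hα' s))
  have hβ2 := fun s => hs1 (thickening_mono (min_le_right _ _) _ (hβ' s))
  simp only [Set.mem_ofPred_eq] at hα2 hβ2
  refine ls_miranda (fun p => ⟨X (α.extend p.1) - X (β.extend p.2),
    Y (α.extend p.1) - Y (β.extend p.2)⟩) ?_ ?_ ?_ ?_ ?_ ?_
  · have : Continuous (fun p : ℝ × ℝ => Complex.equivRealProdCLM.symm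
      (X (α.extend p.1) - X (β.extend p.2), Y (α.extend p.1) - Y (β.extend p.2))) := by
      have := α.continuous_extend
      have := β.continuous_extend
      fun_prop
    convert this using 2
    apply Complex.ext <;> simp
  · intro p hp
    have e1 := congrArg Complex.re hp
    have e2 := congrArg Complex.im hp
    simp only [Complex.zero_re, Complex.zero_im] at e1 e2
    have := hinj (α.extend p.1 - β.extend p.2) (by simpa using e1) (by simpa using e2)
    have e := sub_eq_zero.1 this
    refine (Set.disjoint_left.1 hdis) (thickening_mono (min_le_left _ _) _ (hα' p.1)) ?_
    rw [e]
    exact thickening_mono (min_le_left _ _) _ (hβ' p.2)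
  · intro t; simp; linarith [(hβ2 t).1]
  · intro t; simp; linarith [(hβ2 t).2]
  · intro t; simp; linarith [(hα2 t).1]
  · intro t; simp; linarith [(hα2 t).2]

lemma ls_chain (A : ℕ → Set (E 2)) (hc : ∀ k, IsCompact (A k)) (hA : ∀ k, IsConnected (A k))
    (hm : ∀ k, (A k ∩ A (k + 1)).Nonempty) (i : ℕ) :
    IsCompact (⋃ k ∈ Iic i, A k) ∧ IsConnected (⋃ k ∈ Iic i, A k) := by
  refine ⟨(finite_Iic i).isCompact_biUnion fun k _ => hc k, ?_⟩
  exact IsConnected.biUnion_of_chain ⟨0, by simp⟩ ordConnected_Iic (fun k _ => hA k)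
    (fun k _ _ => hm k)

lemma ls_bdd (Z : E 2 →L[ℝ] ℝ) (K : Set (E 2)) (hK : IsCompact K) : ∃ M, ∀ z ∈ K, |Z z| ≤ M := by
  obtain ⟨M, hM⟩ := hK.exists_bound_of_continuousOn (f := Z) Z.continuous.continuousOn
  exact ⟨M, fun z hz => hM z hz⟩

lemma ls_iter_add (G : E 2 → E 2) (m : E 2) (hGm : ∀ z, G (z + m) = G z + m) (k : ℕ) (z : E 2) :
    G^[k] (z + m) = G^[k] z + m := by
  induction k generalizing z with
  | zero => rfl
  | succ k ih => rw [Function.iterate_succ_apply, Function.iterate_succ_apply, hGm, ih]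

lemma ls_seg (p e : E 2) (τ : ℝ) :
    IsCompact ((fun t : ℝ => p + t • e) '' Icc 0 τ) ∧
    IsPreconnected ((fun t : ℝ => p + t • e) '' Icc 0 τ) := by
  have : Continuous (fun t : ℝ => p + t • e) := by fun_prop
  exact ⟨isCompact_Icc.image this, isPreconnected_Icc.image _ this.continuousOn⟩

lemma ls_step (X Y : E 2 →L[ℝ] ℝ) (hinj : ∀ z, X z = 0 → Y z = 0 → z = 0)
    (eX eY : E 2) (hXX : X eX = 1) (hXY : X eY = 0) (hYX : Y eX = 0) (hYY : Y eY = 1)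
    (G : E 2 → E 2) (hG : Continuous G) (hGi : Function.Injective G)
    (U : Set (E 2)) (hUk : IsCompact U) (hUc : IsConnected U) (hmeet : ∃ u ∈ U, G u ∈ U)
    (m : E 2) (hGm : ∀ z, G (z + m) = G z + m) (n : ℕ) (s0 s1 y1 y2 : ℝ)
    (hU1 : ∀ w ∈ U, X w + X m ≤ s0 ∧ y1 ≤ Y w + Y m)
    (hU2 : ∀ w ∈ U, X (G^[n] w) ≤ s1 ∧ Y (G^[n] w) ≤ y2)
    (K1 : ∀ k, ∀ z ∈ U, X (G^[n + k] z) ≤ s0 → Y (G^[n + k] z) < y1)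
    (K2 : ∀ k, ∀ z ∈ U, X (G^[k] z) + X m ≤ s1 → y2 < Y (G^[k] z) + Y m)
    (hy : y2 < y1) (hunb : ∀ M, ∃ T, ∀ z ∈ U, M < X (G^[T] z))
    (i : ℕ) (z : E 2) (hz : z ∈ U) (hs : s0 < X (G^[n + i] z)) :
    ∃ j, ∃ w ∈ U, X (G^[j] w) + X m = X (G^[n + i] z) ∧
      Y (G^[n + i] z) ≤ Y (G^[j] w) + Y m := by
  by_contra hcon
  push Not at hcon
  obtain ⟨x0, hx0⟩ := hUc.nonempty
  have hcont : ∀ k, Continuous (G^[k]) := fun k => hG.iterate k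
  set p := G^[n + i] z with hp
  set xn := G^[n] x0 with hxn
  have hdisj : ∀ k j, ∀ a ∈ U, ∀ b ∈ U, G^[n + k] a ≠ G^[j] b + m := by
    intro k j a ha b hb hab
    rcases le_or_gt j k with hjk | hjk
    · obtain ⟨d, rfl⟩ := Nat.exists_eq_add_of_le hjk
      have e : G^[j] (G^[n + d] a) = G^[j] (b + m) := by
        rw [ls_iter_add G m hGm, ← hab, ← Function.iterate_add_apply]
        rw [show j + (n + d) = n + (j + d) by omega]
      have e' := hGi.iterate j e
      have h1 := K1 d a ha (by rw [e', map_add]; exact (hU1 b hb).1)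
      rw [e', map_add] at h1
      linarith [(hU1 b hb).2]
    · obtain ⟨d, rfl⟩ := Nat.exists_eq_add_of_le hjk.le
      have e : G^[k] (G^[n] a) = G^[k] (G^[d] b + m) := by
        rw [ls_iter_add G m hGm, ← Function.iterate_add_apply, ← Function.iterate_add_apply, ← hab]
        rw [show k + n = n + k by omega]
      have e' := hGi.iterate k e
      have h1 := K2 d b hb (by rw [← map_add, ← e']; exact (hU2 a ha).1)
      rw [← map_add, ← e'] at h1
      linarith [(hU2 a ha).2]
  obtain ⟨u, hu, hGu⟩ := hmeet
  -- vertical part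
  obtain ⟨cV, kV⟩ := ls_chain (fun k => G^[n + k] '' U)
    (fun k => hUk.image (hcont _)) (fun k => hUc.image _ (hcont _).continuousOn)
    (fun k => ⟨G^[n + k] (G u), ⟨_, hGu, rfl⟩, ⟨u, hu, by
      rw [← Function.iterate_succ_apply]; rfl⟩⟩) i
  set V0 := ⋃ k ∈ Iic i, (fun k => G^[n + k] '' U) k with hV0
  obtain ⟨M1, hM1⟩ := ls_bdd X V0 cV
  obtain ⟨M1', hM1'⟩ := ls_bdd Y V0 cV
  obtain ⟨T, hT⟩ := hunb (M1 - X m)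
  obtain ⟨cH, kH⟩ := ls_chain (fun k => (fun q => G^[k] q + m) '' U)
    (fun k => hUk.image ((hcont _).add continuous_const))
    (fun k => hUc.image _ ((hcont _).add continuous_const).continuousOn)
    (fun k => ⟨G^[k] (G u) + m, ⟨_, hGu, rfl⟩, ⟨u, hu, by
      simp only [Function.iterate_succ_apply]⟩⟩) T
  set H0 := ⋃ k ∈ Iic T, (fun k => (fun q => G^[k] q + m) '' U) k with hH0
  obtain ⟨M2, hM2⟩ := ls_bdd X H0 cH
  obtain ⟨M2', hM2'⟩ := ls_bdd Y H0 cH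
  set τ := |M1| + |M2| + |M1'| + |M2'| + 1 with hτ
  have q1 := abs_nonneg M1
  have q2 := abs_nonneg M2
  have q3 := abs_nonneg M1'
  have q4 := abs_nonneg M2'
  have r1 := le_abs_self M1
  have r2 := le_abs_self M2
  have r3 := le_abs_self M1'
  have r4 := le_abs_self M2'
  have hτ0 : 0 ≤ τ := by positivity
  have hpV : p ∈ V0 := by
    simp only [hV0, mem_iUnion]; exact ⟨i, by simp, z, hz, rfl⟩
  have hxV : xn ∈ V0 := by
    simp only [hV0, mem_iUnion]; exact ⟨0, by simp, x0, hx0, rfl⟩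
  have hxH : x0 + m ∈ H0 := by
    simp only [hH0, mem_iUnion]; exact ⟨0, by simp, x0, hx0, rfl⟩
  have hTH : G^[T] x0 + m ∈ H0 := by
    simp only [hH0, mem_iUnion]; exact ⟨T, by simp, x0, hx0, rfl⟩
  obtain ⟨cP, kP⟩ := ls_seg p eY τ
  obtain ⟨cP', kP'⟩ := ls_seg xn (-eY) τ
  obtain ⟨cQ, kQ⟩ := ls_seg (x0 + m) (-eX) τ
  set P := (fun t : ℝ => p + t • eY) '' Icc 0 τ with hPd
  set P' := (fun t : ℝ => xn + t • (-eY)) '' Icc 0 τ with hPd'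
  set Q := (fun t : ℝ => x0 + m + t • (-eX)) '' Icc 0 τ with hQd
  have z0 : (0 : ℝ) ∈ Icc 0 τ := ⟨le_rfl, hτ0⟩
  have zτ : τ ∈ Icc 0 τ := ⟨hτ0, le_rfl⟩
  have conV : IsConnected (V0 ∪ P ∪ P') := by
    refine ⟨⟨p, Or.inl (Or.inl hpV)⟩, ?_⟩
    refine IsPreconnected.union xn (Or.inl hxV) ⟨0, z0, by simp⟩ ?_ kP'
    exact IsPreconnected.union p hpV ⟨0, z0, by simp⟩ kV.isPreconnected kP
  have conH : IsConnected (H0 ∪ Q) := by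
    refine ⟨⟨_, Or.inl hxH⟩, ?_⟩
    exact IsPreconnected.union (x0 + m) hxH ⟨0, z0, by simp⟩ kH.isPreconnected kQ
  refine ls_cross X Y hinj (V0 ∪ P ∪ P') (H0 ∪ Q) ((cV.union cP).union cP') (cH.union cQ) conV conH
    (xn + τ • (-eY)) (p + τ • eY) (x0 + m + τ • (-eX)) (G^[T] x0 + m)
    (Or.inr ⟨τ, zτ, rfl⟩) (Or.inl (Or.inr ⟨τ, zτ, rfl⟩)) (Or.inr ⟨τ, zτ, rfl⟩) (Or.inl hTH) ?_ ?_ ?_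
  · have b1 := abs_le.1 (hM1' _ hxV)
    have b2 := abs_le.1 (hM1' _ hpV)
    have key : ∀ h ∈ H0 ∪ Q, |Y h| ≤ M2' := by
      rintro h (hh | ⟨t, ht, rfl⟩)
      · exact hM2' h hh
      · have := hM2' _ hxH
        simpa [hYX] using this
    intro h hh
    have b3 := abs_le.1 (key h hh)
    simp only [map_add, map_smul, map_neg, hYY, smul_eq_mul]
    constructor <;> linarith
  · have b1 := abs_le.1 (hM2 _ hxH)
    have key : ∀ h ∈ V0 ∪ P ∪ P', |X h| ≤ M1 := by
      rintro h ((hh | ⟨t, ht, rfl⟩) | ⟨t, ht, rfl⟩)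
      · exact hM1 h hh
      · have := hM1 _ hpV
        simpa [hXY] using this
      · have := hM1 _ hxV
        simpa [hXY] using this
    intro h hh
    have b3 := abs_le.1 (key h hh)
    have b4 := hT x0 hx0
    have b5 : X (x0 + m + τ • (-eX)) = X (x0 + m) - τ := by
      simp only [map_add, map_smul, map_neg, hXX, smul_eq_mul]; ring
    have b6 : X (G^[T] x0 + m) = X (G^[T] x0) + X m := map_add _ _ _
    rw [b5, b6]
    constructor <;> linarith
  · have hQx : ∀ q ∈ Q, X q ≤ s0 ∧ y1 ≤ Y q := by
      rintro q ⟨t, ht, rfl⟩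
      have := hU1 x0 hx0
      have h0 := ht.1
      simp only [map_add, map_smul, map_neg, hXX, hYX, smul_eq_mul]
      constructor <;> linarith
    rw [Set.disjoint_left]
    rintro a ((ha | ⟨t, ht, rfl⟩) | ⟨t, ht, rfl⟩) (hb | hb)
    · simp only [hV0, hH0, mem_iUnion] at ha hb
      obtain ⟨k, -, a', ha', rfl⟩ := ha
      obtain ⟨j, -, b', hb', e⟩ := hb
      exact hdisj k j a' ha' b' hb' e.symm
    · simp only [hV0, mem_iUnion] at ha
      obtain ⟨k, -, a', ha', rfl⟩ := ha
      have h1 := hQx _ hb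
      have h2 := K1 k a' ha' h1.1
      linarith
    · simp only [hH0, mem_iUnion] at hb
      obtain ⟨j, -, b', hb', e⟩ := hb
      have e1 := congrArg X e
      have e2 := congrArg Y e
      simp only [map_add, map_smul, hXY, hYY, smul_eq_mul] at e1 e2
      have h0 := ht.1
      have := hcon j b' hb' (by linarith)
      linarith
    · have h1 := (hQx _ hb).1
      simp only [map_add, map_smul, hXY, smul_eq_mul] at h1
      linarith
    · simp only [hH0, mem_iUnion] at hb
      obtain ⟨j, -, b', hb', e⟩ := hb
      have e1 := congrArg X e
      have e2 := congrArg Y e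
      simp only [map_add, map_smul, map_neg, hXY, hYY, smul_eq_mul] at e1 e2
      have h0 := ht.1
      have h1 := hU2 x0 hx0
      have := K2 j b' hb' (by linarith)
      linarith
    · have h1 := (hQx _ hb).2
      simp only [map_add, map_smul, map_neg, hYY, smul_eq_mul] at h1
      have h0 := ht.1
      have h1 := hU2 x0 hx0
      linarith

lemma ls_bound (X Y : E 2 →L[ℝ] ℝ) (hinj : ∀ z, X z = 0 → Y z = 0 → z = 0)
    (eX eY : E 2) (hXX : X eX = 1) (hXY : X eY = 0) (hYX : Y eX = 0) (hYY : Y eY = 1)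
    (G : E 2 → E 2) (hG : Continuous G) (hGi : Function.Injective G)
    (hGm : ∀ z, ∀ m ∈ ZLat 2, G (z + m) = G z + m)
    (U : Set (E 2)) (hUk : IsCompact U) (hUc : IsConnected U) (hmeet : ∃ u ∈ U, G u ∈ U)
    (R C D L : ℝ) (hL : 0 < L) (hC0 : 0 ≤ C) (hD0 : 0 ≤ D) (hR0 : 0 ≤ R)
    (hR : ∀ x y : ℝ, ∃ m ∈ ZLat 2, |X m - x| ≤ R ∧ |Y m - y| ≤ R)
    (hC : ∀ z, |Y (G z) - Y z| ≤ C)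
    (hD : ∀ z ∈ U, |X z| ≤ D ∧ |Y z| ≤ D)
    (hF : ∀ η > 0, ∃ K, ∀ k : ℕ, ∀ z ∈ U, |X (G^[k] z) - k * L| ≤ η * k + K)
    (κ : ℝ) (hκ : 0 < κ) :
    ∃ c > 0, ∃ N : ℕ, ∀ n ≥ N, (∀ y ∈ U, ∀ z ∈ U, Y (G^[n] y) - Y (G^[n] z) ≤ c * n) →
      ∀ x0 ∈ U, ∃ m ∈ ZLat 2, |X m - n * L| ≤ R ∧ |Y m - (Y (G^[n] x0) + κ * n)| ≤ R ∧ 0 < X m ∧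
        ∃ B, ∀ k : ℕ, ∀ z ∈ U, Y (G^[k] z) * X m ≤ Y m * X (G^[k] z) + B := by
  have hCk : ∀ (k : ℕ) z, |Y (G^[k] z) - Y z| ≤ C * k := by
    intro k
    induction k with
    | zero => intro z; simp
    | succ k ih =>
      intro z
      rw [Function.iterate_succ_apply']
      have h1 := abs_le.1 (hC (G^[k] z))
      have h2 := abs_le.1 (ih z)
      push_cast
      rw [abs_le]; constructor <;> linarith
  set δ := κ / (8 * (C + 1)) with hδ
  have hδ0 : 0 < δ := by positivity
  have hCδ : C * δ ≤ κ / 8 := by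
    rw [hδ, mul_div_assoc', div_le_div_iff₀ (by positivity) (by positivity)]
    nlinarith
  set η := δ * L / (2 * (1 + δ)) with hη
  have hη0 : 0 < η := by positivity
  have hηe : (1 + δ) * η = δ * L / 2 := by rw [hη]; field_simp
  have hηL : 0 < L - η := by nlinarith
  obtain ⟨K, hK⟩ := hF η hη0
  have hK0 : 0 ≤ K := by
    obtain ⟨x, hx⟩ := hUc.nonempty
    have := hK 0 x hx
    simp only [Nat.cast_zero, mul_zero, zero_add] at this
    exact (abs_nonneg _).trans this
  obtain ⟨N1, hN1⟩ := exists_nat_gt ((2 * K + R + D) / (δ * L / 2))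
  obtain ⟨N2, hN2⟩ := exists_nat_gt (R / L)
  obtain ⟨N3, hN3⟩ := exists_nat_gt ((R + D) / (κ / 2))
  refine ⟨κ / 8, by positivity, max N1 (max N2 N3), ?_⟩
  intro n hn hthin x0 hx0
  have c1 : (N1 : ℝ) ≤ n := by exact_mod_cast (le_max_left _ _).trans hn
  have c2 : (N2 : ℝ) ≤ n := by exact_mod_cast ((le_max_left _ _).trans (le_max_right _ _)).trans hn
  have c3 : (N3 : ℝ) ≤ n := by exact_mod_cast ((le_max_right _ _).trans (le_max_right _ _)).trans hn
  have d1 : 2 * K + R + D < n * (δ * L / 2) := (div_lt_iff₀ (by positivity)).1 (hN1.trans_le c1)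
  have d2 : R < n * L := (div_lt_iff₀ (by positivity)).1 (hN2.trans_le c2)
  have d3 : R + D < n * (κ / 2) := (div_lt_iff₀ (by positivity)).1 (hN3.trans_le c3)
  have hn0 : (0 : ℝ) ≤ n := Nat.cast_nonneg n
  obtain ⟨m, hm, hmX, hmY⟩ := hR (n * L) (Y (G^[n] x0) + κ * n)
  have hmX' := abs_le.1 hmX
  have hmY' := abs_le.1 hmY
  have hXm : 0 < X m := by linarith
  refine ⟨m, hm, hmX, hmY, hXm, ?_⟩
  set y0 := Y (G^[n] x0) with hy0
  have hlow : ∀ k : ℕ, ∀ z ∈ U, k * (L - η) - K ≤ X (G^[k] z) := by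
    intro k z hz
    have := (abs_le.1 (hK k z hz)).1
    linarith
  have hnn : ∀ k : ℕ, ∀ z ∈ U, -K ≤ X (G^[k] z) := by
    intro k z hz
    have := hlow k z hz
    have : 0 ≤ (k : ℝ) * (L - η) := by positivity
    linarith
  have hunb : ∀ M, ∃ T : ℕ, ∀ k ≥ T, ∀ z ∈ U, M < X (G^[k] z) := by
    intro M
    obtain ⟨T, hT⟩ := exists_nat_gt ((M + K) / (L - η))
    refine ⟨T, fun k hk z hz => ?_⟩
    have hk' : (T : ℝ) ≤ k := by exact_mod_cast hk
    have := (div_lt_iff₀ hηL).1 (hT.trans_le hk')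
    linarith [hlow k z hz]
  have step := ls_step X Y hinj eX eY hXX hXY hYX hYY G hG hGi U hUk hUc hmeet m
    (fun z => hGm z m hm) n (n * L + R + D) (n * L + η * n + K) (y0 + κ * n - R - D)
    (y0 + κ / 8 * n) ?_ ?_ ?_ ?_ (by linarith) (fun M => by
      obtain ⟨T, hT⟩ := hunb M
      exact ⟨T, hT T le_rfl⟩)
  · obtain ⟨k0, hk0⟩ := hunb (n * L + R + D)
    have hcpt : IsCompact (⋃ k ∈ Iic (max k0 n), G^[k] '' U) :=
      (finite_Iic _).isCompact_biUnion fun k _ => hUk.image (hG.iterate k)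
    obtain ⟨B, hB⟩ := ls_bdd (X m • Y - Y m • X) _ hcpt
    refine ⟨B, ?_⟩
    have main : ∀ N : ℕ, ∀ k : ℕ, ∀ z ∈ U, X (G^[k] z) < -K + N * X m →
        Y (G^[k] z) * X m ≤ Y m * X (G^[k] z) + B := by
      intro N
      induction N with
      | zero =>
        intro k z hz h
        have := hnn k z hz
        simp at h
        linarith
      | succ N ih =>
        intro k z hz h
        rcases le_or_gt k (max k0 n) with hk | hk
        · have := (abs_le.1 (hB (G^[k] z) (by
            simp only [mem_iUnion]; exact ⟨k, hk, z, hz, rfl⟩))).2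
          simp at this
          linarith
        · obtain ⟨i, rfl⟩ := Nat.exists_eq_add_of_le ((le_max_right _ _).trans hk.le)
          obtain ⟨j, w, hw, e1, e2⟩ := step i z hz (hk0 _ ((le_max_left _ _).trans hk.le) z hz)
          push_cast at h
          have h3 := ih j w hw (by linarith)
          have h4 := mul_le_mul_of_nonneg_right e2 hXm.le
          rw [← e1]
          linarith
    intro k z hz
    obtain ⟨N, hN⟩ := exists_nat_gt ((X (G^[k] z) + K) / X m)
    have := (div_lt_iff₀ hXm).1 hN
    exact main N k z hz (by linarith)
  · intro w hw
    have h1 := abs_le.1 (hD w hw).1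
    have h2 := abs_le.1 (hD w hw).2
    constructor <;> linarith
  · intro w hw
    have h1 := (abs_le.1 (hK n w hw)).2
    have h2 := hthin w hw x0 hx0
    constructor <;> linarith
  · intro k z hz h
    have h1 := hlow (n + k) z hz
    push_cast at h1
    have hk : (k : ℝ) ≤ δ * n := by
      by_contra hk
      push Not at hk
      have : (δ * n) * (L - η) ≤ k * (L - η) := by gcongr
      have e : (n : ℝ) * ((1 + δ) * η) = n * (δ * L / 2) := by rw [hηe]
      nlinarith
    have h2 := (abs_le.1 (hCk k (G^[n] z))).2
    rw [← Function.iterate_add_apply, add_comm k n] at h2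
    have h3 := hthin z hz x0 hx0
    have h4 : C * k ≤ C * (δ * n) := by gcongr
    have h5 : C * δ * n ≤ κ / 8 * n := by gcongr
    linarith
  · intro k z hz h
    have h1 := hlow k z hz
    have hk : (k : ℝ) ≤ δ * n := by
      by_contra hk
      push Not at hk
      have : (δ * n) * (L - η) ≤ k * (L - η) := by gcongr
      have e : (n : ℝ) * ((1 + δ) * η) = n * (δ * L / 2) := by rw [hηe]
      nlinarith
    have h2 := (abs_le.1 (hCk k z)).1
    have h3 := (abs_le.1 (hD z hz).2).1
    have h4 : C * k ≤ C * (δ * n) := by gcongr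
    have h5 : C * δ * n ≤ κ / 8 * n := by gcongr
    linarith

/-- `sdot` as a continuous linear functional. -/
def lsX (v : E 2) : E 2 →L[ℝ] ℝ :=
  v 0 • (EuclideanSpace.proj (𝕜 := ℝ) (0 : Fin 2)) + v 1 • (EuclideanSpace.proj (𝕜 := ℝ) (1 : Fin 2))

/-- `pdot` as a continuous linear functional. -/
def lsY (v : E 2) : E 2 →L[ℝ] ℝ :=
  v 0 • (EuclideanSpace.proj (𝕜 := ℝ) (1 : Fin 2)) - v 1 • (EuclideanSpace.proj (𝕜 := ℝ) (0 : Fin 2))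

lemma lsX_apply (v z : E 2) : lsX v z = sdot v z := by
  simp [lsX, sdot]; ring

lemma lsY_apply (v z : E 2) : lsY v z = pdot v z := by
  simp [lsY, pdot]; ring

lemma ls_frac (z : E 2) : ∃ m ∈ ZLat 2, ‖z - m‖ ≤ 2 := by
  refine ⟨!₂[(⌊z 0⌋ : ℝ), (⌊z 1⌋ : ℝ)], ?_, ?_⟩
  · intro i
    fin_cases i
    · exact ⟨⌊z 0⌋, by simp⟩
    · exact ⟨⌊z 1⌋, by simp⟩
  · rw [EuclideanSpace.norm_eq, Real.sqrt_le_left (by norm_num)]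
    have h0 := Int.fract_nonneg (z 0)
    have h1 := Int.fract_nonneg (z 1)
    have h0' := (Int.fract_lt_one (z 0)).le
    have h1' := (Int.fract_lt_one (z 1)).le
    simp [Fin.sum_univ_two]
    nlinarith

lemma ls_disp (G : E 2 → E 2) (hG : Continuous G) (hGm : ∀ z, ∀ m ∈ ZLat 2, G (z + m) = G z + m) :
    ∃ C, 0 ≤ C ∧ ∀ z, ‖G z - z‖ ≤ C := by
  obtain ⟨C, hC⟩ := (isCompact_closedBall (0 : E 2) 2).exists_bound_of_continuousOn
    (f := fun z => G z - z) (by fun_prop)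
  have key : ∀ z, ‖G z - z‖ ≤ C := by
    intro z
    obtain ⟨m, hm, hz⟩ := ls_frac z
    have h1 := hC (z - m) (by simpa using hz)
    have h2 := hGm (z - m) m hm
    rw [sub_add_cancel] at h2
    have e : G z - z = G (z - m) - (z - m) := by
      rw [h2]
      abel
    rw [e]
    exact h1
  exact ⟨C, (norm_nonneg _).trans (key 0), key⟩

lemma ls_disp_iter (G : E 2 → E 2) (C : ℝ) (hC : ∀ z, ‖G z - z‖ ≤ C) (k : ℕ) (z : E 2) :
    ‖G^[k] z - z‖ ≤ C * k := by
  induction k with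
  | zero => simp
  | succ k ih =>
    rw [Function.iterate_succ_apply']
    have := norm_add_le (G (G^[k] z) - G^[k] z) (G^[k] z - z)
    rw [sub_add_sub_cancel] at this
    push_cast
    linarith [hC (G^[k] z)]

lemma ls_compact (G : E 2 → E 2) (C : ℝ) (hC0 : 0 ≤ C) (hC : ∀ z, ‖G z - z‖ ≤ C) (U : Set (E 2))
    (n : ℕ → ℕ) (z : ℕ → E 2) (hn : Tendsto n atTop atTop) (hz : ∀ i, z i ∈ U) :
    ∃ ρ ∈ rotRel G U, ∃ φ : ℕ → ℕ, StrictMono φ ∧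
      Tendsto (fun i => (n (φ i) : ℝ)⁻¹ • (G^[n (φ i)] (z (φ i)) - z (φ i))) atTop (𝓝 ρ) := by
  obtain ⟨ρ, -, φ, hφ, hlim⟩ := (isCompact_closedBall (0 : E 2) C).tendsto_subseq
    (x := fun i => (n i : ℝ)⁻¹ • (G^[n i] (z i) - z i)) (by
      intro i
      rw [mem_closedBall_zero_iff, norm_smul, norm_inv, Real.norm_natCast]
      have := ls_disp_iter G C hC (n i) (z i)
      rcases Nat.eq_zero_or_pos (n i) with h | h
      · simp [h, hC0]
      · rw [inv_mul_le_iff₀ (by exact_mod_cast h)]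
        linarith)
  exact ⟨ρ, ⟨n ∘ φ, z ∘ φ, hn.comp hφ.tendsto_atTop, fun i => hz _, hlim⟩, φ, hφ, hlim⟩

/-- Uniform linear growth of a functional which is constant on the rotation set. -/
lemma ls_growth (G : E 2 → E 2) (C : ℝ) (hC0 : 0 ≤ C) (hC : ∀ z, ‖G z - z‖ ≤ C) (U : Set (E 2))
    (X : E 2 →L[ℝ] ℝ) (D : ℝ) (hD : ∀ z ∈ U, |X z| ≤ D) (hD0 : 0 ≤ D) (L : ℝ)
    (hrot : ∀ ρ ∈ rotRel G U, X ρ = L) (η : ℝ) (hη : 0 < η) :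
    ∃ K, ∀ k : ℕ, ∀ z ∈ U, |X (G^[k] z) - k * L| ≤ η * k + K := by
  have h1 : ∃ N : ℕ, ∀ k ≥ N, ∀ z ∈ U, |X (G^[k] z - z) - k * L| ≤ η * k := by
    by_contra hcon
    push Not at hcon
    choose n hn z hz hbad using hcon
    obtain ⟨ρ, hρ, φ, hφ, hlim⟩ := ls_compact G C hC0 hC U n z
      (tendsto_atTop_mono hn tendsto_id) hz
    have hl2 := (X.continuous.tendsto ρ).comp hlim
    rw [hrot ρ hρ] at hl2
    have := Metric.tendsto_atTop.1 hl2 η hη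
    obtain ⟨i, hi⟩ := this
    have h2 := hi (i + 1) (by omega)
    have hpos : (0 : ℝ) < n (φ (i + 1)) := by
      have : 0 < n (φ (i + 1)) := lt_of_lt_of_le (by
        have := hφ.id_le (i + 1); simp at this; omega) (hn (φ (i + 1)))
      exact_mod_cast this
    have h3 := hbad (φ (i + 1))
    rw [Real.dist_eq] at h2
    simp only [Function.comp_apply, map_smul, smul_eq_mul] at h2
    set N := (n (φ (i + 1)) : ℝ)
    set W := X (G^[n (φ (i + 1))] (z (φ (i + 1))) - z (φ (i + 1)))
    have e : W - N * L = N * (N⁻¹ * W - L) := by field_simp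
    rw [e, abs_mul, abs_of_pos hpos] at h3
    nlinarith
  obtain ⟨N, hN⟩ := h1
  refine ⟨D + (‖X‖ * (C * N) + N * |L|), ?_⟩
  intro k z hz
  have hz' := abs_le.1 (hD z hz)
  have hN0 : (0 : ℝ) ≤ N := Nat.cast_nonneg N
  have hk0 : (0 : ℝ) ≤ k := Nat.cast_nonneg k
  have hη' : 0 ≤ η * k := by positivity
  have e : X (G^[k] z) - k * L = X (G^[k] z - z) - k * L + X z := by rw [map_sub]; ring
  rw [e]
  refine (abs_add_le _ _).trans ?_
  rcases le_or_gt N k with h | h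
  · have := hN k h z hz
    have : 0 ≤ ‖X‖ * (C * N) + N * |L| := by positivity
    linarith [hD z hz]
  · have hkN : (k : ℝ) ≤ N := by exact_mod_cast h.le
    have a1 := X.le_opNorm (G^[k] z - z)
    have a2 := ls_disp_iter G C hC k z
    have a3 : ‖X‖ * ‖G^[k] z - z‖ ≤ ‖X‖ * (C * N) := by
      gcongr
      exact a2.trans (by gcongr)
    have a4 : |X (G^[k] z - z) - k * L| ≤ |X (G^[k] z - z)| + |k * L| := abs_sub _ _
    have a5 : |(k : ℝ) * L| ≤ N * |L| := by
      rw [abs_mul, abs_of_nonneg hk0]; gcongr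
    rw [Real.norm_eq_abs] at a1
    linarith [hD z hz]

lemma ls_limit (G : E 2 → E 2) (U : Set (E 2)) (X Y : E 2 →L[ℝ] ℝ) (D : ℝ)
    (hD : ∀ z ∈ U, |X z| ≤ D ∧ |Y z| ≤ D) (x y B : ℝ) (hx : 0 ≤ |x|)
    (hB : ∀ k : ℕ, ∀ z ∈ U, Y (G^[k] z) * x ≤ y * X (G^[k] z) + B)
    (ρ : E 2) (hρ : ρ ∈ rotRel G U) : Y ρ * x ≤ y * X ρ := by
  obtain ⟨n, z, hn, hz, hlim⟩ := hρ
  have hX := (X.continuous.tendsto ρ).comp hlim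
  have hY := (Y.continuous.tendsto ρ).comp hlim
  have hni : Tendsto (fun i => ((n i : ℝ))⁻¹) atTop (𝓝 0) :=
    tendsto_inv_atTop_zero.comp (tendsto_natCast_atTop_atTop.comp hn)
  have hR : Tendsto (fun i => y * X ((n i : ℝ)⁻¹ • (G^[n i] (z i) - z i)) +
      (n i : ℝ)⁻¹ * (B + D * |y| + D * |x|)) atTop (𝓝 (y * X ρ + 0 * (B + D * |y| + D * |x|))) :=
    (hX.const_mul y).add (hni.mul_const _)
  have := le_of_tendsto_of_tendsto' (hY.mul_const x) hR (fun i => by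
    have h1 := hB (n i) (z i) (hz i)
    have h2 := hD (z i) (hz i)
    have h3 : -(Y (z i) * x) ≤ D * |x| := by
      refine (neg_le_abs _).trans ?_
      rw [abs_mul]; gcongr; exact h2.2
    have h4 : y * X (z i) ≤ D * |y| := by
      refine (le_abs_self _).trans ?_
      rw [abs_mul, mul_comm]; gcongr; exact h2.1
    simp only [Function.comp_apply, map_smul, map_sub, smul_eq_mul]
    have h5 : (0 : ℝ) ≤ (n i : ℝ)⁻¹ := by positivity
    have h6 := mul_le_mul_of_nonneg_left (show (Y (G^[n i] (z i)) - Y (z i)) * x ≤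
      y * (X (G^[n i] (z i)) - X (z i)) + (B + D * |y| + D * |x|) by linarith) h5
    linarith)
  simpa using this

set_option maxHeartbeats 2000000

/-- **Corollary (linear spreading in the `v^⊥` direction).**
If `ρ_Û(G) = L_{λ,v}[a,b]` with `a < b`, then there are `c > 0` and `N'` such that
for all `n ≥ N'` the spread of `⟨G^n(z), v^⊥⟩` over `z ∈ Û` exceeds `c·n`. -/
theorem linear_spreading
    (G : E 2 ≃ₜ E 2) (g : T 2 ≃ₜ T 2) (hlift : IsLift G g)
    (Uh : Set (E 2)) (hUb : Bornology.IsBounded Uh) (hUc : IsConnected Uh)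
    (hmeet : ((⇑G) '' Uh ∩ Uh).Nonempty)
    (lam : ℝ) (hlam : lam ≠ 0) (v : E 2) (hv : v ≠ 0) (a b : ℝ) (hab : a < b)
    (hrot : rotRel (⇑G) Uh = lineSeg lam v a b) :
    ∃ c > (0 : ℝ), ∃ N' : ℕ, ∀ n ≥ N',
      sSup ((fun z => pdot v ((⇑G)^[n] z)) '' Uh) -
        sInf ((fun z => pdot v ((⇑G)^[n] z)) '' Uh) > c * n := by
  obtain ⟨-, hGm⟩ := hlift
  have hG : Continuous (⇑G) := G.continuous
  obtain ⟨C0, hC00, hC0⟩ := ls_disp G hG hGm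
  set X := lsX v with hXd
  set Y := lsY v with hYd
  set q := sdot v v with hq
  have hq0 : 0 < q := by
    have : v 0 ≠ 0 ∨ v 1 ≠ 0 := by
      by_contra h
      push Not at h
      apply hv
      ext i; fin_cases i
      · simpa using h.1
      · simpa using h.2
    rw [hq, sdot]
    rcases this with h | h
    · have := mul_self_pos.2 h; nlinarith [mul_self_nonneg (v 1)]
    · have := mul_self_pos.2 h; nlinarith [mul_self_nonneg (v 0)]
  set L := lam * q with hLd
  have hXa : ∀ z, X z = sdot v z := lsX_apply v
  have hYa : ∀ z, Y z = pdot v z := lsY_apply v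
  have hinj : ∀ z, X z = 0 → Y z = 0 → z = 0 := by
    intro z h1 h2
    rw [hXa, sdot] at h1
    rw [hYa, pdot] at h2
    have e0 : z 0 * q = 0 := by rw [hq, sdot]; linear_combination v 0 * h1 - v 1 * h2
    have e1 : z 1 * q = 0 := by rw [hq, sdot]; linear_combination v 1 * h1 + v 0 * h2
    ext i; fin_cases i
    · simpa [hq0.ne'] using e0
    · simpa [hq0.ne'] using e1
  set eX : E 2 := !₂[v 0 / q, v 1 / q] with heX
  set eY : E 2 := !₂[-(v 1) / q, v 0 / q] with heY
  have hqe : v 0 * v 0 + v 1 * v 1 = q := rfl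
  have hXX : X eX = 1 := by
    rw [hXa, sdot]; simp [heX]; field_simp; linarith
  have hXY : X eY = 0 := by
    rw [hXa, sdot]; simp [heY]; field_simp; ring
  have hYX : Y eX = 0 := by
    rw [hYa, pdot]; simp [heX]; field_simp; ring
  have hYY : Y eY = 1 := by
    rw [hYa, pdot]; simp [heY]; field_simp; linarith
  have hseg : ∀ ρ, ρ ∈ rotRel (⇑G) Uh ↔ X ρ = L ∧ a * X ρ ≤ Y ρ ∧ Y ρ ≤ b * X ρ := by
    intro ρ
    rw [hrot, hXa, hYa]
    rfl
  obtain ⟨x0, hx0⟩ := hUc.nonempty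
  have hL : 0 < L := by
    obtain ⟨ρ, hρ, -⟩ := ls_compact (⇑G) C0 hC00 hC0 Uh id (fun _ => x0) tendsto_id (fun _ => hx0)
    obtain ⟨h1, h2, h3⟩ := (hseg ρ).1 hρ
    rw [h1] at h2 h3
    have hne : L ≠ 0 := mul_ne_zero hlam hq0.ne'
    rcases lt_or_gt_of_ne hne with h | h
    · nlinarith
    · exact h
  set ρb : E 2 := L • eX + (b * L) • eY with hρb
  set ρa : E 2 := L • eX + (a * L) • eY with hρa
  have hb1 : X ρb = L := by simp [hρb, hXX, hXY]
  have hb2 : Y ρb = b * L := by simp [hρb, hYX, hYY]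
  have ha1 : X ρa = L := by simp [hρa, hXX, hXY]
  have ha2 : Y ρa = a * L := by simp [hρa, hYX, hYY]
  have habL : a * L ≤ b * L := by nlinarith
  have hbm : ρb ∈ rotRel (⇑G) Uh := (hseg _).2 (by rw [hb1, hb2]; exact ⟨rfl, habL, le_rfl⟩)
  have ham : ρa ∈ rotRel (⇑G) Uh := (hseg _).2 (by rw [ha1, ha2]; exact ⟨rfl, le_rfl, habL⟩)
  -- pass to the closure
  set U := closure Uh with hU
  have hsub : Uh ⊆ U := subset_closure
  have hUk : IsCompact U := hUb.isCompact_closure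
  have hUcc : IsConnected U := hUc.closure
  have hmono : ∀ ρ ∈ rotRel (⇑G) Uh, ρ ∈ rotRel (⇑G) U := by
    rintro ρ ⟨n, z, hn, hz, hl⟩
    exact ⟨n, z, hn, fun i => hsub (hz i), hl⟩
  have hmeet' : ∃ u ∈ U, G u ∈ U := by
    obtain ⟨y, ⟨u, hu, rfl⟩, hy⟩ := hmeet
    exact ⟨u, hsub hu, hsub hy⟩
  obtain ⟨D1, hD1⟩ := ls_bdd X U hUk
  obtain ⟨D2, hD2⟩ := ls_bdd Y U hUk
  set D := max D1 D2 with hDd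
  have hD : ∀ z ∈ U, |X z| ≤ D ∧ |Y z| ≤ D := fun z hz =>
    ⟨(hD1 z hz).trans (le_max_left _ _), (hD2 z hz).trans (le_max_right _ _)⟩
  have hD0 : 0 ≤ D := (abs_nonneg _).trans (hD x0 (hsub hx0)).1
  have hF : ∀ η > 0, ∃ K, ∀ k : ℕ, ∀ z ∈ U, |X ((⇑G)^[k] z) - k * L| ≤ η * k + K := by
    intro η hη
    obtain ⟨K, hK⟩ := ls_growth (⇑G) C0 hC00 hC0 Uh X D (fun z hz => (hD z (hsub hz)).1) hD0 L
      (fun ρ hρ => ((hseg ρ).1 hρ).1) η hη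
    refine ⟨K, fun k => ?_⟩
    have hcl : IsClosed {z : E 2 | |X ((⇑G)^[k] z) - k * L| ≤ η * k + K} := by
      have := hG.iterate k
      exact isClosed_le (by fun_prop) continuous_const
    exact fun z hz => closure_minimal (fun w hw => hK k w hw) hcl hz
  -- lattice approximation
  set R := (‖X‖ + ‖Y‖) * 2 with hRd
  have hR0 : 0 ≤ R := by positivity
  have hR : ∀ x y : ℝ, ∃ m ∈ ZLat 2, |X m - x| ≤ R ∧ |Y m - y| ≤ R := by
    intro x y
    obtain ⟨m, hm, hd⟩ := ls_frac (x • eX + y • eY)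
    refine ⟨m, hm, ?_, ?_⟩
    · have h1 := X.le_opNorm (x • eX + y • eY - m)
      have e : X (x • eX + y • eY - m) = x - X m := by simp [hXX, hXY]
      rw [e, Real.norm_eq_abs, abs_sub_comm] at h1
      refine h1.trans ?_
      rw [hRd]; gcongr; linarith [norm_nonneg Y]
    · have h1 := Y.le_opNorm (x • eX + y • eY - m)
      have e : Y (x • eX + y • eY - m) = y - Y m := by simp [hYX, hYY]
      rw [e, Real.norm_eq_abs, abs_sub_comm] at h1
      refine h1.trans ?_
      rw [hRd]; gcongr; linarith [norm_nonneg X]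
  set C := ‖Y‖ * C0 with hCd
  have hCp : 0 ≤ C := by positivity
  have hC : ∀ z, |Y (G z) - Y z| ≤ C := by
    intro z
    rw [← map_sub, ← Real.norm_eq_abs]
    exact (Y.le_opNorm _).trans (by rw [hCd]; gcongr; exact hC0 z)
  set κ := (b - a) * L / 4 with hκd
  have hκ : 0 < κ := by have := sub_pos.2 hab; positivity
  obtain ⟨c1, hc1, N1, hN1⟩ := ls_bound X Y hinj eX eY hXX hXY hYX hYY (⇑G) hG G.injective hGm U hUk
    hUcc hmeet' R C D L hL hCp hD0 hR0 hR hC hD hF κ hκ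
  obtain ⟨c2, hc2, N2, hN2⟩ := ls_bound X (-Y) (fun z h1 h2 => hinj z h1 (by simpa using h2))
    eX (-eY) hXX (by simp [hXY]) (by simp [hYX]) (by simp [hYY]) (⇑G) hG G.injective hGm U hUk
    hUcc hmeet' R C D L hL hCp hD0 hR0 (fun x y => by
      obtain ⟨m, hm, h1, h2⟩ := hR x (-y)
      refine ⟨m, hm, h1, ?_⟩
      rw [← abs_neg]
      convert h2 using 2
      simp; ring) (fun z => by
      have := hC z
      rw [← abs_neg]
      convert this using 2
      simp; ring) (fun z hz => by simpa using hD z hz) hF κ hκ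
  obtain ⟨N3, hN3⟩ := exists_nat_gt ((2 * R + |a| * R + |b| * R) / (2 * κ))
  refine ⟨min c1 c2, lt_min hc1 hc2, max N1 (max N2 N3), ?_⟩
  intro n hn
  by_contra hcon
  push Not at hcon
  have hcont : Continuous ((⇑G)^[n]) := hG.iterate n
  obtain ⟨M, hM⟩ := ls_bdd Y _ (hUk.image hcont)
  have hth : ∀ y ∈ Uh, ∀ z ∈ Uh, Y ((⇑G)^[n] y) - Y ((⇑G)^[n] z) ≤ min c1 c2 * n := by
    intro y hy z hz
    have b1 : BddAbove ((fun z => pdot v ((⇑G)^[n] z)) '' Uh) := by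
      refine ⟨M, ?_⟩
      rintro _ ⟨w, hw, rfl⟩
      have := (abs_le.1 (hM _ ⟨w, hsub hw, rfl⟩)).2
      rwa [hYa] at this
    have b2 : BddBelow ((fun z => pdot v ((⇑G)^[n] z)) '' Uh) := by
      refine ⟨-M, ?_⟩
      rintro _ ⟨w, hw, rfl⟩
      have := (abs_le.1 (hM _ ⟨w, hsub hw, rfl⟩)).1
      rwa [hYa] at this
    have h1 := le_csSup b1 ⟨y, hy, rfl⟩
    have h2 := csInf_le b2 ⟨z, hz, rfl⟩
    rw [hYa, hYa]
    simp only at h1 h2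
    linarith
  have hth' : ∀ y ∈ U, ∀ z ∈ U, Y ((⇑G)^[n] y) - Y ((⇑G)^[n] z) ≤ min c1 c2 * n := by
    intro y hy z hz
    have hcl : IsClosed {p : E 2 × E 2 | Y ((⇑G)^[n] p.1) - Y ((⇑G)^[n] p.2) ≤ min c1 c2 * n} :=
      isClosed_le (by fun_prop) continuous_const
    have hmem : (y, z) ∈ closure (Uh ×ˢ Uh) := by
      rw [closure_prod_eq]; exact ⟨hy, hz⟩
    exact closure_minimal (fun p hp => hth p.1 hp.1 p.2 hp.2) hcl hmem
  have hn0 : (0 : ℝ) ≤ n := Nat.cast_nonneg n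
  have hx0' := hsub hx0
  obtain ⟨m, -, e1, e2, e3, B, hB⟩ := hN1 n ((le_max_left _ _).trans hn)
    (fun y hy z hz => (hth' y hy z hz).trans (by gcongr; exact min_le_left _ _)) x0 hx0'
  obtain ⟨m', -, e1', e2', e3', B', hB'⟩ := hN2 n
    (((le_max_left _ _).trans (le_max_right _ _)).trans hn)
    (fun y hy z hz => by
      have h1 := hth' z hz y hy
      have h2 : min c1 c2 * (n : ℝ) ≤ c2 * n := by gcongr; exact min_le_right _ _
      simp only [ContinuousLinearMap.neg_apply]
      linarith) x0 hx0'
  have f1 := ls_limit (⇑G) U X Y D hD (X m) (Y m) B (abs_nonneg _) hB ρb (hmono _ hbm)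
  have f2 := ls_limit (⇑G) U X (-Y) D (fun z hz => by simpa using hD z hz) (X m') ((-Y) m') B'
    (abs_nonneg _) hB' ρa (hmono _ ham)
  simp only [ContinuousLinearMap.neg_apply] at f2 e2'
  rw [hb1, hb2] at f1
  rw [ha1, ha2] at f2
  have g1 : b * X m ≤ Y m := le_of_mul_le_mul_right (by linarith) hL
  have g2 : Y m' ≤ a * X m' := le_of_mul_le_mul_right (by linarith) hL
  have k1 := abs_le.1 e2
  have k2 := abs_le.1 e2'
  have j1 : |b * (X m - n * L)| ≤ |b| * R := by rw [abs_mul]; gcongr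
  have j2 : |a * (X m' - n * L)| ≤ |a| * R := by rw [abs_mul]; gcongr
  have j1' := abs_le.1 j1
  have j2' := abs_le.1 j2
  have c3 : (N3 : ℝ) ≤ n := by exact_mod_cast ((le_max_right _ _).trans (le_max_right _ _)).trans hn
  have d3 := (div_lt_iff₀ (by positivity)).1 (hN3.trans_le c3)
  have hk4 : (n : ℝ) * (4 * κ) = n * ((b - a) * L) := by rw [hκd]; ring
  linarith
end
end
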